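/- arXiv:2311.07543 — 2 statements merged into one kernel-verified Lean document; each statement's English description precedes it below -/
import Mathlib

section
/- The operators 𝒟_1, …, 𝒟_n pairwise commute: 𝒟_i·𝒟_j = 𝒟_j·𝒟_i for all 1 ≤ i, j ≤ n. -/
noncomputable section

/-- The Laurent polynomial ring `R[X₁^{±1}, …, Xₙ^{±1}]` in `n` variables over `R`,
realised as the monoid algebra of the additive monoid `Fin n →₀ ℤ` of exponent vectors. -/
abbrev Laur (R : Type*) [CommRing R] (n : ℕ) : Type _ :=
  AddMonoidAlgebra R (Fin n →₀ ℤ)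

variable {R : Type*} [CommRing R] {n : ℕ}

/-- The monomial `c · X^a`. -/
def mono (a : Fin n →₀ ℤ) (c : R) : Laur R n := AddMonoidAlgebra.single a c

/-- The generator `X_i`. -/
def Xel (i : Fin n) : Laur R n := mono (Finsupp.single i 1) 1

/-- The element `X_i⁻¹`. -/
def XinvEl (i : Fin n) : Laur R n := mono (Finsupp.single i (-1)) 1

/-- Multiplication by a Laurent polynomial, as a linear endomorphism. -/
def mulOp (x : Laur R n) : Module.End R (Laur R n) := LinearMap.mulLeft R x

/-- The operator of multiplication by `X_i`, with `ℕ`-indexing (`0`-based; junk value `1`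
out of range). -/
def XOp (i : ℕ) : Module.End R (Laur R n) :=
  if h : i < n then mulOp (Xel ⟨i, h⟩) else 1

/-- The operator of multiplication by `X_i⁻¹`, with `ℕ`-indexing. -/
def XinvOp (i : ℕ) : Module.End R (Laur R n) :=
  if h : i < n then mulOp (XinvEl ⟨i, h⟩) else 1

/-- Ascending product `f s * f (s+1) * ⋯ * f (s+len-1)` (equal to `1` when `len = 0`). -/
def aF {M : Type*} [Monoid M] (f : ℕ → M) (s len : ℕ) : M :=
  ((List.range' s len).map f).prod

/-- Descending product `f (s+len-1) * ⋯ * f (s+1) * f s` (equal to `1` when `len = 0`). -/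
def dF {M : Type*} [Monoid M] (f : ℕ → M) (s len : ℕ) : M :=
  (((List.range' s len).map f).reverse).prod

/-- Integer power `u^z`, where `v` is a designated (two-sided) inverse of `u`. -/
def zpowOp {M : Type*} [Monoid M] (u v : M) (z : ℤ) : M :=
  if 0 ≤ z then u ^ z.toNat else v ^ (-z).toNat


theorem comm_family {M : Type*} [Monoid M] (t D : ℕ → M) (m : ℕ)
    (hrec : ∀ i, i < m → D i = t i * D (i+1) * t i)
    (hbr : ∀ i, i + 1 < m → t i * t (i+1) * t i = t (i+1) * t i * t (i+1))
    (hfar : ∀ i j, i + 1 < j → j < m → Commute (t i) (t j))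
    (hDt : ∀ k, k + 1 < m → Commute (t k) (D m))
    (hB : 0 < m → Commute (D (m-1)) (D m)) :
    ∀ i j, i ≤ m → j ≤ m → Commute (D i) (D j) := by
  -- low commutation
  have low : ∀ d i, i + d = m → ∀ k, k + 1 < i → Commute (t k) (D i) := by
    intro d
    induction d with
    | zero => intro i hi k hk; obtain rfl : i = m := by omega
              exact hDt k hk
    | succ d ih =>
      intro i hi k hk
      rw [hrec i (by omega)]
      have h1 := hfar k i hk (by omega)
      exact (h1.mul_right (ih (i+1) (by omega) k (by omega))).mul_right h1
  have high : ∀ d i, i + d = m → ∀ k, i < k → k < m → Commute (t k) (D i) := by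
    intro d
    induction d with
    | zero => intro i hi k hk hk'; omega
    | succ d ih =>
      intro i hi k hk hkm
      by_cases hk2 : k = i + 1
      · subst hk2
        have hl := low (d-1) (i+2) (by omega) i (by omega)
        have hb := hbr i hkm
        rw [hrec i (by omega), hrec (i+1) (by omega)]
        generalize t i = a at *
        generalize t (i+1) = b at *
        generalize D (i+1+1) = z at *
        have hl' : a * z = z * a := hl
        change b * (a * (b * z * b) * a) = (a * (b * z * b) * a) * b
        calc b * (a * (b * z * b) * a) = (b * a * b) * z * b * a := by simp only [mul_assoc]
          _ = (a * b * a) * z * b * a := by rw [hb]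
          _ = a * b * (a * z) * b * a := by simp only [mul_assoc]
          _ = a * b * (z * a) * b * a := by rw [hl']
          _ = a * b * z * (a * b * a) := by simp only [mul_assoc]
          _ = a * b * z * (b * a * b) := by rw [hb]
          _ = _ := by simp only [mul_assoc]
      · rw [hrec i (by omega)]
        have h1 := (hfar i k (by omega) (by omega)).symm
        exact (h1.mul_right (ih (i+1) (by omega) k (by omega) hkm)).mul_right h1
  have main : ∀ d i, i + d = m → ∀ j, i < j → j ≤ m → Commute (D i) (D j) := by
    intro d
    induction d with
    | zero => intro i hi j hj hj'; omega
    | succ d ih =>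
      intro i hi
      have far : ∀ j, i + 1 < j → j ≤ m → Commute (D i) (D j) := by
        intro j hj hjm
        rw [hrec i (by omega)]
        have h1 := low (m-j) j (by omega) i hj
        exact (h1.mul_left (ih (i+1) (by omega) j hj hjm)).mul_left h1
      intro j hj hjm
      by_cases hj2 : i + 1 < j
      · exact far j hj2 hjm
      obtain rfl : j = i + 1 := by omega
      by_cases hm : i + 1 = m
      · have := hB (by omega)
        rw [← hm] at this
        simpa using this
      · rw [hrec (i+1) (by omega)]
        have h1 := (high (d+1) i hi (i+1) (by omega) (by omega)).symm
        exact (h1.mul_right (far (i+2) (by omega) (by omega))).mul_right h1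
  intro i j hi hj
  rcases lt_trichotomy i j with h | h | h
  · exact main (m-i) i (by omega) j h hj
  · subst h; exact Commute.refl _
  · exact (main (m-j) j (by omega) i h hi).symm

/-- The unit T commutes with the product of f at y and f at T y T. -/
theorem sym_commute {F R : Type*} [Field F] [Ring R] [Algebra F R] (c : F)
    (T y : Rˣ) (hT : (T : R) * T = 1 + c • (T : R))
    (hy : T * y * T * y = y * T * y * T) (s : Finset ℤ) (a : ℤ → F) :
    Commute (T : R) ((∑ j ∈ s, a j • ((y ^ j : Rˣ) : R)) *
      ∑ j ∈ s, a j • (((T * y * T) ^ j : Rˣ) : R)) := by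
  obtain ⟨z, hz⟩ : ∃ z, z = T * y * T := ⟨_, rfl⟩
  rw [← hz]
  have hyz : Commute y z := by
    change y * z = z * y
    rw [hz, hy]; simp only [mul_assoc]
  have hyzR : Commute (y : R) (z : R) := by
    change (y : R) * z = z * y
    exact_mod_cast congrArg Units.val hyz.eq
  have he : Commute T (y * z) := by
    change T * (y * z) = y * z * T
    rw [hz]
    calc T * (y * (T * y * T)) = (T * y * T * y) * T := by simp only [mul_assoc]
      _ = _ := by rw [hy]; simp only [mul_assoc]
  have hp1 : Commute (T : R) ((y : R) + z) := by
    change (T : R) * (y + z) = (y + z) * T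
    have : (z : R) = T * y * T := by rw [hz]; simp
    rw [this]
    calc (T : R) * (y + T * y * T) = T * y + (T * T) * (y * T) := by noncomm_ring
      _ = T * y + (1 + c • (T : R)) * (y * T) := by rw [hT]
      _ = y * T + T * y * (1 + c • (T : R)) := by
          simp only [add_mul, mul_add, smul_mul_assoc, mul_smul_comm, mul_one, one_mul, mul_assoc]
          abel
      _ = y * T + T * y * (T * T) := by rw [hT]
      _ = _ := by noncomm_ring
  have heR : Commute (T : R) ((y : R) * z) := by
    change (T : R) * (y * z) = y * z * T
    exact_mod_cast congrArg Units.val he.eq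
  have hpd : ∀ d : ℕ, Commute (T : R) ((y : R) ^ d + (z : R) ^ d) ∧
      Commute (T : R) ((y : R) ^ (d+1) + (z : R) ^ (d+1)) := by
    intro d
    induction d with
    | zero =>
      refine ⟨?_, by simpa using hp1⟩
      simp only [pow_zero]
      exact (Commute.one_right _).add_right (Commute.one_right _)
    | succ d ih =>
      refine ⟨ih.2, ?_⟩
      have : (y : R) ^ (d+1+1) + (z : R) ^ (d+1+1)
          = (y + z) * (y ^ (d+1) + z ^ (d+1)) - y * z * (y ^ d + z ^ d) := by
        have h1 : (z : R) * y ^ (d+1) = y * z * y ^ d := by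
          rw [pow_succ' (y:R) d, ← mul_assoc, hyzR.eq]
        have h2 : (y : R) * z ^ (d+1) = y * z * z ^ d := by
          rw [pow_succ' (z:R) d, ← mul_assoc]
        rw [add_mul, mul_add, mul_add, mul_add, h1, h2, ← pow_succ', ← pow_succ']
        abel
      rw [this]
      exact (hp1.mul_right ih.2).sub_right (heR.mul_right ih.1)
  have hs0 : ∀ (d : ℕ) (k : ℤ), Commute (T : R)
      (((y ^ (k + d) * z ^ k : Rˣ) : R) + ((y ^ k * z ^ (k + d) : Rˣ) : R)) := by
    intro d k
    have e1 : ((y ^ (k + d) * z ^ k : Rˣ) : R) + ((y ^ k * z ^ (k + d) : Rˣ) : R)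
        = (((y * z) ^ k : Rˣ) : R) * ((y:R) ^ d + (z:R) ^ d) := by
      have a1 : y ^ (k + d) * z ^ k = (y * z) ^ k * y ^ d := by
        rw [hyz.mul_zpow, zpow_add, zpow_natCast, mul_assoc, mul_assoc]
        congr 1
        exact ((hyz.zpow_right k).pow_left d).eq
      have a2 : y ^ k * z ^ (k + d) = (y * z) ^ k * z ^ d := by
        rw [hyz.mul_zpow, zpow_add, zpow_natCast, mul_assoc]
      rw [a1, a2]; push_cast; rw [mul_add]
    rw [e1]
    refine Commute.mul_right ?_ (hpd d).1
    exact (he.zpow_right k).units_val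
  have hs : ∀ j k : ℤ, Commute (T : R)
      (((y ^ j : Rˣ) : R) * ((z ^ k : Rˣ) : R) + ((y ^ k : Rˣ) : R) * ((z ^ j : Rˣ) : R)) := by
    intro j k
    rcases le_total k j with h | h
    · obtain ⟨d, rfl⟩ := Int.le.dest h
      simpa using hs0 d k
    · obtain ⟨d, rfl⟩ := Int.le.dest h
      rw [add_comm]
      simpa using hs0 d j
  induction s using Finset.induction_on with
  | empty => simp
  | insert j s hj ih =>
    rw [Finset.sum_insert hj, Finset.sum_insert hj, add_mul, mul_add, mul_add]
    set f := ∑ j ∈ s, a j • ((y ^ j : Rˣ) : R) with hf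
    set g := ∑ j ∈ s, a j • ((z ^ j : Rˣ) : R) with hg
    have hmid : Commute (T : R) (a j • ((y ^ j : Rˣ) : R) * g + f * a j • ((z ^ j : Rˣ) : R)) := by
      rw [hf, hg, Finset.mul_sum, Finset.sum_mul, ← Finset.sum_add_distrib]
      refine Commute.sum_right _ _ _ fun k _ => ?_
      have := ((hs j k).smul_right (a j * a k))
      convert this using 1
      simp only [smul_mul_assoc, mul_smul_comm, smul_smul, smul_add, mul_comm]
    have hdiag : Commute (T : R) (a j • ((y ^ j : Rˣ) : R) * a j • ((z ^ j : Rˣ) : R)) := by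
      have h2 : Commute (T : R) (((y ^ j : Rˣ) : R) * ((z ^ j : Rˣ) : R)) := by
        have := (he.zpow_right j).units_val
        rw [hyz.mul_zpow] at this
        simpa using this
      rw [smul_mul_assoc, mul_smul_comm]
      exact (h2.smul_right _).smul_right _
    have e : a j • ((y ^ j : Rˣ) : R) * a j • ((z ^ j : Rˣ) : R) + a j • ((y ^ j : Rˣ) : R) * g
        + (f * a j • ((z ^ j : Rˣ) : R) + f * g)
      = a j • ((y ^ j : Rˣ) : R) * a j • ((z ^ j : Rˣ) : R) +
        (a j • ((y ^ j : Rˣ) : R) * g + f * a j • ((z ^ j : Rˣ) : R)) + f * g := by abel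
    rw [e]
    exact (hdiag.add_right hmid).add_right ih

theorem key_commute {F R : Type*} [Field F] [Ring R] [Algebra F R] (c : F)
    (T x y : Rˣ) (hT : (T : R) * T = 1 + c • (T : R))
    (hy : T * y * T * y = y * T * y * T) (hx : T * x * T * x = x * T * x * T)
    (hc : T⁻¹ * y * T * x = x * (T * y * T)) (s : Finset ℤ) (a : ℤ → F) (D : R)
    (hD : D = x * ∑ j ∈ s, a j • ((y ^ j : Rˣ) : R)) :
    T * D * T * D = D * (T * D * T) := by
  have hcom := sym_commute c T y hT hy s a
  set f := ∑ j ∈ s, a j • ((y ^ j : Rˣ) : R) with hf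
  set g := ∑ j ∈ s, a j • (((T * y * T) ^ j : Rˣ) : R) with hg
  have hyz : Commute y (T * y * T) := by
    change y * (T * y * T) = (T * y * T) * y
    rw [hy]; simp only [mul_assoc]
  have hfg : Commute f g := by
    refine Commute.sum_left _ _ _ fun i _ => Commute.sum_right _ _ _ fun k _ => ?_
    refine (Commute.smul_left ?_ _).smul_right _
    exact (hyz.zpow_zpow i k).units_val
  have hz : ∀ j : ℤ, y ^ j * (T * x) = (T * x) * (T * y * T) ^ j := by
    intro j
    have h : SemiconjBy (T * x) (T * y * T) y := by
      change T * x * (T * y * T) = y * (T * x)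
      rw [mul_assoc, ← hc]; group
    exact (h.zpow_right j).eq.symm
  have hft : f * (T * x) = T * x * g := by
    rw [hf, hg, Finset.sum_mul, Finset.mul_sum]
    refine Finset.sum_congr rfl fun j _ => ?_
    rw [smul_mul_assoc, mul_smul_comm]
    congr 1
    exact_mod_cast congrArg Units.val (hz j)
  have hxR : (T : R) * x * T * x = x * T * x * T := by exact_mod_cast congrArg Units.val hx
  rw [hD]
  calc (T : R) * (x * f) * T * (x * f) = T * x * (f * (T * x)) * f := by simp only [mul_assoc]
    _ = (T * x * T * x) * (g * f) := by rw [hft]; simp only [mul_assoc]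
    _ = x * T * x * (T * (f * g)) := by rw [hxR, hfg.eq]; simp only [mul_assoc]
    _ = x * T * x * (f * g * T) := by rw [hcom.eq]
    _ = x * (T * x * g) * f * T := by rw [hfg.eq]; simp only [mul_assoc]
    _ = x * (f * (T * x)) * f * T := by rw [hft]
    _ = _ := by simp only [mul_assoc]

/-- Units that can be moved through `E` from right to left. -/
def moveGroup {R : Type*} [Ring R] (E : R) : Subgroup Rˣ where
  carrier := {u | ∃ G : Rˣ, E * u = G * E}
  mul_mem' := by
    rintro u v ⟨G, hG⟩ ⟨H, hH⟩
    refine ⟨G * H, ?_⟩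
    rw [Units.val_mul, ← mul_assoc, hG, mul_assoc, hH, Units.val_mul, mul_assoc]
  one_mem' := ⟨1, by simp⟩
  inv_mem' := by
    rintro u ⟨G, hG⟩
    refine ⟨G⁻¹, ?_⟩
    rw [Units.mul_inv_eq_iff_eq_mul, mul_assoc, hG, Units.inv_mul_cancel_left]

/-- The relations between the operators used below. -/
structure Daha (F V : Type*) [Field F] [AddCommGroup V] [Module F V] (m : ℕ) where
  t : ℕ → (Module.End F V)ˣ
  x : ℕ → (Module.End F V)ˣ
  P : (Module.End F V)ˣ
  Q : (Module.End F V)ˣ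
  c : F
  τ : F
  e : V
  hinv : ∀ k, k < m → (((t k)⁻¹ : (Module.End F V)ˣ) : Module.End F V) = t k - c • 1
  htx : ∀ k, k < m → t k * x (k+1) * t k = x k
  htx' : ∀ k j, k < m → j ≤ m → j ≠ k → j ≠ k + 1 → Commute (t k) (x j)
  hxx : ∀ i j, Commute (x i) (x j)
  hPx : ∀ j, j < m → P * x (j+1) = x j * P
  hPx0 : P * x 0 = Q * x m * P
  hQ : ∀ u, Commute Q u
  hte : ∀ k, k < m → (t k : Module.End F V) e = τ • e
  hPe : (P : Module.End F V) e = e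
  hvan : ∀ E : Module.End F V, E e = 0 → (∀ j, j ≤ m → x j ∈ moveGroup E) → E = 0

namespace Daha

variable {F V : Type*} [Field F] [AddCommGroup V] [Module F V] {m : ℕ} (d : Daha F V m)

theorem tx (k : ℕ) (hk : k < m) : d.t k * d.x (k+1) = d.x k * (d.t k)⁻¹ := by
  rw [← d.htx k hk]; group

theorem tz (k : ℕ) (hk : k < m) : Commute (d.t k) (d.x k * d.x (k+1)) := by
  have h := d.htx k hk
  change d.t k * (d.x k * d.x (k+1)) = d.x k * d.x (k+1) * d.t k
  rw [(d.hxx k (k+1)).eq]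
  nth_rewrite 1 [← h]
  rw [(d.hxx (k+1) k).eq]
  nth_rewrite 1 [← h]
  simp only [mul_assoc]

theorem move_of_commute {R : Type*} [Ring R] {E : R} {u : Rˣ} (h : Commute E (u : R)) :
    u ∈ moveGroup E := ⟨u, h.eq⟩

theorem intertwine (S r : (Module.End F V)ˣ) (k l : ℕ) (hk : k < m) (hl : l < m)
    (hr : ∀ u, Commute r u) (hSe : (S : Module.End F V) d.e = d.e)
    (h1 : S * d.x (k+1) = r * d.x (l+1) * S) (h0 : S * d.x k = r * d.x l * S)
    (hj : ∀ j, j ≤ m → j ≠ k → j ≠ k + 1 → ∃ j' r', j' ≤ m ∧ j' ≠ l ∧ j' ≠ l + 1 ∧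
      (∀ u, Commute r' u) ∧ S * d.x j = r' * d.x j' * S) :
    S * d.t k = d.t l * S := by
  have main : ((S * d.t k : (Module.End F V)ˣ) : Module.End F V)
      - ((d.t l * S : (Module.End F V)ˣ) : Module.End F V) = 0 := by
    apply d.hvan
    · simp only [LinearMap.sub_apply, Units.val_mul, Module.End.mul_apply, d.hte k hk, hSe,
        d.hte l hl, map_smul, sub_self]
    · set E := ((S * d.t k : (Module.End F V)ˣ) : Module.End F V)
        - ((d.t l * S : (Module.End F V)ˣ) : Module.End F V) with hE
      have m1 : d.x (k+1) ∈ moveGroup E := by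
        refine ⟨r * d.x l, ?_⟩
        have a1 : S * d.t k * d.x (k+1) = r * d.x l * (S * (d.t k)⁻¹) := by
          rw [mul_assoc, d.tx k hk, ← mul_assoc, h0, mul_assoc]
        have a2 : d.t l * S * d.x (k+1) = r * d.x l * ((d.t l)⁻¹ * S) := by
          rw [mul_assoc, h1, ← mul_assoc, ← mul_assoc, ← (hr _).eq, mul_assoc r, d.tx l hl]
          simp only [mul_assoc]
        rw [hE, sub_mul, ← Units.val_mul, ← Units.val_mul, a1, a2, Units.val_mul (r * d.x l),
          Units.val_mul (r * d.x l), ← mul_sub]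
        congr 1
        rw [Units.val_mul, Units.val_mul, d.hinv k hk, d.hinv l hl, mul_sub, sub_mul,
          Units.val_mul, Units.val_mul]
        simp
      have mz : d.x k * d.x (k+1) ∈ moveGroup E := by
        refine ⟨r * r * (d.x l * d.x (l+1)), ?_⟩
        have a0 : S * (d.x k * d.x (k+1)) = r * r * (d.x l * d.x (l+1)) * S := by
          rw [← mul_assoc, h0, mul_assoc, h1]
          calc r * d.x l * (r * d.x (l+1) * S) = r * (d.x l * r) * d.x (l+1) * S := by
                simp only [mul_assoc]
            _ = _ := by rw [← (hr _).eq]; simp only [mul_assoc]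
        have a1 : S * d.t k * (d.x k * d.x (k+1)) = r * r * (d.x l * d.x (l+1)) * (S * d.t k) := by
          rw [mul_assoc, (d.tz k hk).eq, ← mul_assoc, a0, mul_assoc]
        have a2 : d.t l * S * (d.x k * d.x (k+1)) = r * r * (d.x l * d.x (l+1)) * (d.t l * S) := by
          have hc : Commute (d.t l) (r * r * (d.x l * d.x (l+1))) :=
            (((hr _).symm).mul_right (hr _).symm).mul_right (d.tz l hl)
          rw [mul_assoc, a0, ← mul_assoc, hc.eq, mul_assoc]
        rw [hE, sub_mul, mul_sub, ← Units.val_mul, ← Units.val_mul, a1, a2]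
        simp only [Units.val_mul]
      intro j hjm
      by_cases hj0 : j = k
      · subst hj0
        have := Subgroup.mul_mem _ mz (Subgroup.inv_mem _ m1)
        simpa using this
      by_cases hj1 : j = k + 1
      · subst hj1; exact m1
      obtain ⟨j', r', hj', n1, n2, hr', hS⟩ := hj j hjm hj0 hj1
      refine ⟨r' * d.x j', ?_⟩
      have a1 : S * d.t k * d.x j = r' * d.x j' * (S * d.t k) := by
        rw [mul_assoc, (d.htx' k j hk hjm hj0 hj1).eq, ← mul_assoc, hS, mul_assoc]
      have a2 : d.t l * S * d.x j = r' * d.x j' * (d.t l * S) := by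
        have hc : Commute (d.t l) (r' * d.x j') :=
          ((hr' _).symm).mul_right (d.htx' l j' hl hj' n1 n2)
        rw [mul_assoc, hS, ← mul_assoc, hc.eq, mul_assoc]
      rw [hE, sub_mul, mul_sub, ← Units.val_mul, ← Units.val_mul, a1, a2]
      simp only [Units.val_mul]
  exact Units.ext (sub_eq_zero.mp main)

theorem Pt (i : ℕ) (hi : i + 1 < m) : d.P * d.t (i+1) = d.t i * d.P := by
  apply d.intertwine d.P 1 (i+1) i hi (by omega) (fun u => Commute.one_left u) d.hPe
  · rw [one_mul, d.hPx _ hi]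
  · rw [one_mul, d.hPx _ (by omega)]
  · intro j hj h1 h2
    cases j with
    | zero => exact ⟨m, d.Q, le_rfl, by omega, by omega, d.hQ, d.hPx0⟩
    | succ j => exact ⟨j, 1, by omega, by omega, by omega, fun u => Commute.one_left u,
                  by rw [one_mul, d.hPx _ (by omega)]⟩

theorem PPt (p : ℕ) (hp : p + 1 = m) : d.P * d.P * d.t 0 = d.t p * (d.P * d.P) := by
  have hp' : p < m := by omega
  have hPm := d.hPx p hp'
  rw [hp] at hPm
  have g0 : d.P * d.P * d.x 0 = d.Q * d.x p * (d.P * d.P) := by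
    rw [mul_assoc, d.hPx0, ← mul_assoc, ← mul_assoc, ← (d.hQ _).eq, mul_assoc d.Q, hPm]
    simp only [mul_assoc]
  have g1 : d.P * d.P * d.x 1 = d.Q * d.x m * (d.P * d.P) := by
    rw [mul_assoc, d.hPx 0 (by omega), ← mul_assoc, d.hPx0]
    simp only [mul_assoc]
  apply d.intertwine (d.P * d.P) d.Q 0 p (by omega) hp' d.hQ
  · rw [Units.val_mul, Module.End.mul_apply, d.hPe, d.hPe]
  · rw [hp]; exact g1
  · exact g0
  · intro j hj h1 h2
    obtain ⟨j, rfl⟩ : ∃ i, j = i + 2 := ⟨j - 2, by omega⟩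
    refine ⟨j, 1, by omega, by omega, by omega, fun u => Commute.one_left u, ?_⟩
    rw [one_mul, mul_assoc, d.hPx (j+1) (by omega), ← mul_assoc, d.hPx j (by omega), mul_assoc]

theorem far_aux (i j : ℕ) (hi : i < m) (hj : j < m) (h1 : i ≠ j) (h2 : i + 1 ≠ j) (h3 : i ≠ j + 1) :
    d.x (i+1) ∈ moveGroup ((d.t i : Module.End F V) * d.t j - d.t j * d.t i) ∧
    d.x i ∈ moveGroup ((d.t i : Module.End F V) * d.t j - d.t j * d.t i) := by
  set E := (d.t i : Module.End F V) * d.t j - d.t j * d.t i with hE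
  have c0 := d.htx' j i hj (by omega) h1 h3
  have c1 := d.htx' j (i+1) hj (by omega) h2 (by omega)
  have m1 : d.x (i+1) ∈ moveGroup E := by
    refine ⟨d.x i, ?_⟩
    have a1 : d.t i * d.t j * d.x (i+1) = d.x i * ((d.t i)⁻¹ * d.t j) := by
      rw [mul_assoc, c1.eq, ← mul_assoc, d.tx i hi, mul_assoc]
    have a2 : d.t j * d.t i * d.x (i+1) = d.x i * (d.t j * (d.t i)⁻¹) := by
      rw [mul_assoc, d.tx i hi, ← mul_assoc, c0.eq, mul_assoc]
    rw [hE, sub_mul, ← Units.val_mul, ← Units.val_mul, ← Units.val_mul, ← Units.val_mul, a1, a2,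
      Units.val_mul (d.x i), Units.val_mul (d.x i), ← mul_sub]
    congr 1
    rw [Units.val_mul, Units.val_mul, d.hinv i hi, mul_sub, sub_mul, Units.val_mul, Units.val_mul]
    simp
  have mz : d.x i * d.x (i+1) ∈ moveGroup E := by
    apply move_of_commute
    have k1 := (d.tz i hi).units_val
    have k2 := (c0.mul_right c1).units_val
    exact (k1.mul_left k2).sub_left (k2.mul_left k1)
  refine ⟨m1, ?_⟩
  have := Subgroup.mul_mem _ mz (Subgroup.inv_mem _ m1)
  simpa using this

theorem moveGroup_neg {R : Type*} [Ring R] (E : R) : moveGroup (-E) = moveGroup E := by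
  ext u
  change (∃ G : Rˣ, -E * u = G * -E) ↔ (∃ G : Rˣ, E * u = G * E)
  simp

theorem far (i j : ℕ) (hij : i + 1 < j) (hj : j < m) : Commute (d.t i) (d.t j) := by
  have main : (d.t i : Module.End F V) * d.t j - d.t j * d.t i = 0 := by
    apply d.hvan
    · simp only [LinearMap.sub_apply, Module.End.mul_apply, d.hte i (by omega),
        d.hte j hj, map_smul, sub_self]
    · intro k hk
      have A := d.far_aux i j (by omega) hj (by omega) (by omega) (by omega)
      have B := d.far_aux j i hj (by omega) (by omega) (by omega) (by omega)
      rw [← neg_sub, moveGroup_neg] at B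
      by_cases k1 : k = i
      · subst k1; exact A.2
      by_cases k2 : k = i + 1
      · subst k2; exact A.1
      by_cases k3 : k = j
      · subst k3; exact B.2
      by_cases k4 : k = j + 1
      · subst k4; exact B.1
      apply move_of_commute
      have a := (d.htx' i k (by omega) hk k1 k2).units_val
      have b := (d.htx' j k (by omega) hk k3 k4).units_val
      exact (a.mul_left b).sub_left (b.mul_left a)
  refine Units.ext ?_
  have := sub_eq_zero.mp main
  simpa using this

theorem braid (i : ℕ) (hi : i + 1 < m) :
    d.t i * d.t (i+1) * d.t i = d.t (i+1) * d.t i * d.t (i+1) := by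
  have main : ((d.t i * d.t (i+1) * d.t i : (Module.End F V)ˣ) : Module.End F V)
      - ((d.t (i+1) * d.t i * d.t (i+1) : (Module.End F V)ˣ) : Module.End F V) = 0 := by
    have hi' : i < m := by omega
    apply d.hvan
    · simp only [LinearMap.sub_apply, Units.val_mul, Module.End.mul_apply, d.hte i hi',
        d.hte (i+1) hi, map_smul, sub_self]
    · have ra := d.hinv i hi'
      have rb := d.hinv (i+1) hi
      have ax1 := d.tx i hi'
      have bx2 : d.t (i+1) * d.x (i+2) = d.x (i+1) * (d.t (i+1))⁻¹ := d.tx (i+1) hi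
      have ax2 := d.htx' i (i+2) hi' (by omega) (by omega) (by omega)
      have bx0 := d.htx' (i+1) i hi (by omega) (by omega) (by omega)
      have az := d.tz i hi'
      have bz : Commute (d.t (i+1)) (d.x (i+1) * d.x (i+2)) := d.tz (i+1) hi
      have others : ∀ k, k ≤ m → k ≠ i → k ≠ i + 1 → k ≠ i + 2 →
          Commute (d.t i) (d.x k) ∧ Commute (d.t (i+1)) (d.x k) := fun k h0 h1 h2 h3 =>
        ⟨d.htx' i k hi' h0 h1 h2, d.htx' (i+1) k hi h0 h2 h3⟩
      generalize d.t i = a at *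
      generalize d.t (i+1) = b at *
      have hcomm : ∀ u, Commute a u → Commute b u → u ∈ moveGroup
          (((a * b * a : (Module.End F V)ˣ) : Module.End F V)
          - ((b * a * b : (Module.End F V)ˣ) : Module.End F V)) := by
        intro u ha hb
        apply move_of_commute
        exact (((ha.mul_left hb).mul_left ha).units_val).sub_left
          (((hb.mul_left ha).mul_left hb).units_val)
      set E := ((a * b * a : (Module.End F V)ˣ) : Module.End F V)
          - ((b * a * b : (Module.End F V)ˣ) : Module.End F V) with hE
      have inner1 : ((a⁻¹ * b⁻¹ * a : (Module.End F V)ˣ) : Module.End F V)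
          - ((b * a⁻¹ * b⁻¹ : (Module.End F V)ˣ) : Module.End F V) = E := by
        have e1 : ((a⁻¹ * b⁻¹ * a : (Module.End F V)ˣ) : Module.End F V)
            = a * b * a - d.c • ((b : Module.End F V) * a) - d.c • 1 := by
          rw [Units.val_mul, Units.val_mul, rb, mul_sub, sub_mul, mul_smul_comm, mul_one,
            smul_mul_assoc, Units.inv_mul, ra, sub_mul, sub_mul, smul_mul_assoc, one_mul,
            smul_mul_assoc]
        have e2 : ((b * a⁻¹ * b⁻¹ : (Module.End F V)ˣ) : Module.End F V)
            = b * a * b - d.c • ((b : Module.End F V) * a) - d.c • 1 := by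
          rw [Units.val_mul, Units.val_mul, ra, mul_sub, sub_mul, mul_smul_comm, mul_one,
            smul_mul_assoc, Units.mul_inv, rb, mul_sub, mul_smul_comm, mul_one]
        rw [e1, e2, hE]; simp only [Units.val_mul]; abel
      have inner2 : ((a * b⁻¹ * a⁻¹ : (Module.End F V)ˣ) : Module.End F V)
          - ((b⁻¹ * a⁻¹ * b : (Module.End F V)ˣ) : Module.End F V) = E := by
        have e1 : ((a * b⁻¹ * a⁻¹ : (Module.End F V)ˣ) : Module.End F V)
            = a * b * a - d.c • ((a : Module.End F V) * b) - d.c • 1 := by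
          rw [Units.val_mul, Units.val_mul, rb, mul_sub, sub_mul, mul_smul_comm, mul_one,
            smul_mul_assoc, Units.mul_inv, ra, mul_sub, mul_smul_comm, mul_one]
        have e2 : ((b⁻¹ * a⁻¹ * b : (Module.End F V)ˣ) : Module.End F V)
            = b * a * b - d.c • ((a : Module.End F V) * b) - d.c • 1 := by
          rw [Units.val_mul, Units.val_mul, ra, mul_sub, sub_mul, mul_smul_comm, mul_one,
            smul_mul_assoc, Units.inv_mul, rb, sub_mul, sub_mul, smul_mul_assoc, one_mul,
            smul_mul_assoc]
        rw [e1, e2, hE]; simp only [Units.val_mul]; abel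
      have m2 : d.x (i+2) ∈ moveGroup E := by
        refine ⟨d.x i, ?_⟩
        have a1 : a * b * a * d.x (i+2) = d.x i * (a⁻¹ * b⁻¹ * a) := by
          rw [mul_assoc, ax2.eq, ← mul_assoc, mul_assoc a, bx2, ← mul_assoc, ax1]
          simp only [mul_assoc]
        have a2 : b * a * b * d.x (i+2) = d.x i * (b * a⁻¹ * b⁻¹) := by
          rw [mul_assoc, bx2, ← mul_assoc, mul_assoc b, ax1, ← mul_assoc, bx0.eq]
          simp only [mul_assoc]
        rw [hE, sub_mul, ← Units.val_mul, ← Units.val_mul, a1, a2,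
          Units.val_mul (d.x i), Units.val_mul (d.x i), ← mul_sub, inner1]
      have m0 : (d.x i)⁻¹ ∈ moveGroup E := by
        refine ⟨(d.x (i+2))⁻¹, ?_⟩
        have ax0 : a * (d.x i)⁻¹ = (d.x (i+1))⁻¹ * a⁻¹ := by
          have : a * d.x (i+1) * a = d.x i := by rw [ax1]; group
          rw [← this]; group
        have bx1 : b * (d.x (i+1))⁻¹ = (d.x (i+2))⁻¹ * b⁻¹ := by
          have : b * d.x (i+2) * b = d.x (i+1) := by rw [bx2]; group
          rw [← this]; group
        have a1 : a * b * a * (d.x i)⁻¹ = (d.x (i+2))⁻¹ * (a * b⁻¹ * a⁻¹) := by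
          rw [mul_assoc, ax0, ← mul_assoc, mul_assoc a, bx1, ← mul_assoc, ax2.inv_right.eq]
          simp only [mul_assoc]
        have a2 : b * a * b * (d.x i)⁻¹ = (d.x (i+2))⁻¹ * (b⁻¹ * a⁻¹ * b) := by
          rw [mul_assoc, bx0.inv_right.eq, ← mul_assoc, mul_assoc b, ax0, ← mul_assoc, bx1]
          simp only [mul_assoc]
        rw [hE, sub_mul, ← Units.val_mul, ← Units.val_mul, a1, a2,
          Units.val_mul (d.x (i+2))⁻¹, Units.val_mul (d.x (i+2))⁻¹, ← mul_sub, inner2]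
      have m0' : d.x i ∈ moveGroup E := by simpa using Subgroup.inv_mem _ m0
      have mz : d.x i * d.x (i+1) * d.x (i+2) ∈ moveGroup E := by
        apply hcomm
        · exact az.mul_right ax2
        · rw [mul_assoc]; exact bx0.mul_right bz
      intro k hk
      by_cases k0 : k = i
      · subst k0; exact m0'
      by_cases k2 : k = i + 2
      · subst k2; exact m2
      by_cases k1 : k = i + 1
      · subst k1
        have := Subgroup.mul_mem _ m0 (Subgroup.mul_mem _ mz (Subgroup.inv_mem _ m2))
        simpa [mul_assoc] using this
      · exact hcomm _ (others k hk k0 k1 k2).1 (others k hk k0 k1 k2).2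
  exact Units.ext (sub_eq_zero.mp main)

/-- `t 0 ⁻¹ * ⋯ * t (r-1) ⁻¹`. -/
def A : ℕ → (Module.End F V)ˣ
  | 0 => 1
  | r + 1 => A r * (d.t r)⁻¹

/-- `t 1 ⁻¹ * ⋯ * t r ⁻¹`. -/
def B : ℕ → (Module.End F V)ˣ
  | 0 => 1
  | r + 1 => B r * (d.t (r+1))⁻¹

theorem A_far (j : ℕ) (hj : j < m) : ∀ r, r < j → Commute (d.t j) (d.A r)
  | 0, _ => Commute.one_right _
  | r + 1, h => (A_far j hj r (by omega)).mul_right ((d.far r j (by omega) hj).symm.inv_right)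

theorem A_x : ∀ r, r < m → Commute (d.A r) (d.x m)
  | 0, _ => Commute.one_left _
  | r + 1, h => (A_x r (by omega)).mul_left
      ((d.htx' r m (by omega) le_rfl (by omega) (by omega)).inv_left)

theorem A_shift (k : ℕ) : ∀ r, k + 1 < r → r ≤ m → d.t (k+1) * d.A r = d.A r * d.t k := by
  intro r
  induction r with
  | zero => intro h; omega
  | succ r ih =>
    intro h hr
    by_cases hk : k + 1 < r
    · change d.t (k+1) * (d.A r * (d.t r)⁻¹) = (d.A r * (d.t r)⁻¹) * d.t k
      rw [← mul_assoc, ih hk (by omega), mul_assoc, mul_assoc,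
        ((d.far k r hk (by omega)).inv_right).eq]
    · obtain rfl : r = k + 1 := by omega
      change d.t (k+1) * (d.A k * (d.t k)⁻¹ * (d.t (k+1))⁻¹)
        = (d.A k * (d.t k)⁻¹ * (d.t (k+1))⁻¹) * d.t k
      have hb := d.braid k (by omega)
      have h1 := (d.A_far (k+1) (by omega) k (by omega)).eq
      have h2 : d.t (k+1) * ((d.t k)⁻¹ * (d.t (k+1))⁻¹) = (d.t k)⁻¹ * (d.t (k+1))⁻¹ * d.t k := by
        rw [eq_comm, ← mul_inv_rev, inv_mul_eq_iff_eq_mul, eq_comm, ← mul_assoc, ← hb]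
        group
      rw [mul_assoc (d.A k), ← mul_assoc, h1, mul_assoc, h2]
      simp only [mul_assoc]

theorem A_P : ∀ r, r < m → d.A r * d.P = d.P * d.B r
  | 0, _ => by simp [A, B]
  | r + 1, h => by
    have h1 : (d.t r)⁻¹ * d.P = d.P * (d.t (r+1))⁻¹ := by
      rw [inv_mul_eq_iff_eq_mul, ← mul_assoc, ← d.Pt r h]; group
    change d.A r * (d.t r)⁻¹ * d.P = d.P * (d.B r * (d.t (r+1))⁻¹)
    rw [mul_assoc, h1, ← mul_assoc, A_P r (by omega), mul_assoc]

theorem BA : ∀ r, r < m → d.t 0 * (d.B r * d.A r) = d.B r * d.A r * d.t r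
  | 0, _ => by simp [A, B]
  | r + 1, h => by
    have h1 := ((d.A_far (r+1) h r (by omega)).inv_left).eq
    have hb := d.braid r h
    have h2 : d.t r * ((d.t (r+1))⁻¹ * (d.t r)⁻¹) = (d.t (r+1))⁻¹ * (d.t r)⁻¹ * d.t (r+1) := by
      rw [eq_comm, ← mul_inv_rev, inv_mul_eq_iff_eq_mul, eq_comm, ← mul_assoc, hb]
      group
    have e : d.B (r+1) * d.A (r+1) = d.B r * d.A r * ((d.t (r+1))⁻¹ * (d.t r)⁻¹) := by
      change (d.B r * (d.t (r+1))⁻¹) * (d.A r * (d.t r)⁻¹) = _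
      rw [mul_assoc, ← mul_assoc _ (d.A r), h1]
      simp only [mul_assoc]
    rw [e, ← mul_assoc, BA r (by omega), mul_assoc, h2]
    simp only [mul_assoc]

/-- The last `Y`. -/
def y : (Module.End F V)ˣ := d.P * d.A m

theorem t_y (k : ℕ) (hk : k + 1 < m) : Commute (d.t k) d.y := by
  change d.t k * (d.P * d.A m) = d.P * d.A m * d.t k
  rw [← mul_assoc, ← d.Pt k hk, mul_assoc, d.A_shift k m hk le_rfl, mul_assoc]

theorem yt (p : ℕ) (hp : p + 1 = m) : d.y * d.t p = d.P * d.A p := by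
  subst hp
  change d.P * (d.A p * (d.t p)⁻¹) * d.t p = _
  simp [mul_assoc]

theorem ty (p : ℕ) (hp : p + 1 = m) :
    d.t p * d.y * d.t p * d.y = d.y * d.t p * d.y * d.t p := by
  have h1 := d.yt p hp
  have h2 : d.y = d.P * d.A p * (d.t p)⁻¹ := by rw [← h1]; group
  have h3 : d.t p * (d.P * d.A p * (d.P * d.A p)) = d.P * d.A p * (d.P * d.A p) * d.t p := by
    have e : d.P * d.A p * (d.P * d.A p) = d.P * d.P * (d.B p * d.A p) := by
      calc _ = d.P * (d.A p * d.P) * d.A p := by simp only [mul_assoc]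
        _ = _ := by rw [d.A_P p (by omega)]; simp only [mul_assoc]
    rw [e, ← mul_assoc, ← d.PPt p hp, mul_assoc, d.BA p (by omega)]
    simp only [mul_assoc]
  calc d.t p * d.y * d.t p * d.y = d.t p * (d.y * d.t p) * d.y := by simp only [mul_assoc]
    _ = d.t p * (d.P * d.A p) * (d.P * d.A p * (d.t p)⁻¹) := by rw [h1, h2]
    _ = d.t p * (d.P * d.A p * (d.P * d.A p)) * (d.t p)⁻¹ := by simp only [mul_assoc]
    _ = (d.P * d.A p) * (d.P * d.A p) := by rw [h3]; group
    _ = _ := by rw [← h1]; simp only [mul_assoc]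

theorem txtx (p : ℕ) (hp : p + 1 = m) :
    d.t p * d.x m * d.t p * d.x m = d.x m * d.t p * d.x m * d.t p := by
  have h := d.htx p (by omega)
  rw [hp] at h
  rw [h, (d.hxx p m).eq, ← h]; simp only [mul_assoc]

theorem cross (p : ℕ) (hp : p + 1 = m) :
    (d.t p)⁻¹ * d.y * d.t p * d.x m = d.x m * (d.t p * d.y * d.t p) := by
  have h := d.htx p (by omega)
  have hP := d.hPx p (by omega)
  rw [hp] at h hP
  rw [mul_assoc (d.t p)⁻¹, mul_assoc (d.t p), d.yt p hp, mul_assoc, mul_assoc d.P,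
    (d.A_x p (by omega)).eq, ← mul_assoc d.P, hP, ← h]
  group

theorem t_x (k : ℕ) (hk : k + 1 < m) : Commute (d.t k) (d.x m) :=
  d.htx' k m (by omega) le_rfl (by omega) (by omega)

theorem hecke (k : ℕ) (hk : k < m) :
    (d.t k : Module.End F V) * d.t k = 1 + d.c • (d.t k : Module.End F V) := by
  have h := d.hinv k hk
  have h2 : (d.t k : Module.End F V) * ((d.t k)⁻¹ : (Module.End F V)ˣ) = 1 := Units.mul_inv _
  rw [h, mul_sub, mul_smul_comm, mul_one] at h2
  rw [← h2]; abel

theorem final (s : Finset ℤ) (a : ℤ → F) (D : ℕ → Module.End F V)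
    (hDm : D m = d.x m * ∑ j ∈ s, a j • ((d.y ^ j : (Module.End F V)ˣ) : Module.End F V))
    (hrec : ∀ i, i < m → D i = d.t i * D (i+1) * d.t i) :
    ∀ i j, i ≤ m → j ≤ m → Commute (D i) (D j) := by
  apply comm_family (fun i => (d.t i : Module.End F V)) D m hrec
  · intro i hi
    exact_mod_cast congrArg Units.val (d.braid i hi)
  · intro i j hi hj
    exact (d.far i j hi hj).units_val
  · intro k hk
    rw [hDm]
    refine (d.t_x k hk).units_val.mul_right (Commute.sum_right _ _ _ fun j _ => ?_)
    exact (((d.t_y k hk).zpow_right j).units_val).smul_right _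
  · intro hm
    have hp : m - 1 + 1 = m := by omega
    have := key_commute d.c (d.t (m-1)) (d.x m) d.y (d.hecke _ (by omega)) (d.ty _ hp)
      (d.txtx _ hp) (d.cross _ hp) s a (D m) hDm
    rw [hrec (m-1) (by omega), hp]
    exact this

end Daha

section Concrete

variable {F : Type*} [Field F]

theorem mono_mul {n : ℕ} (u v : Fin n →₀ ℤ) (r s : F) :
    (mono u r : Laur F n) * mono v s = mono (u + v) (r * s) := by
  simp [mono, AddMonoidAlgebra.single_mul_single]

theorem mono_zero_one {n : ℕ} : (mono 0 1 : Laur F n) = 1 := rfl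

theorem end_ext {n : ℕ} {f g : Module.End F (Laur F n)}
    (h : ∀ v, f (mono v 1) = g (mono v 1)) : f = g := by
  refine LinearMap.ext fun p => ?_
  induction p using AddMonoidAlgebra.induction_linear with
  | zero => simp
  | add p q hp hq => simp [hp, hq]
  | single v r =>
    have : (AddMonoidAlgebra.single v r : Laur F n) = r • mono v 1 := by
      simp [mono]
    rw [this, map_smul, map_smul, h]

/-- Multiplication by a monomial as a unit. -/
def mU {n : ℕ} : Multiplicative (Fin n →₀ ℤ) →* (Module.End F (Laur F n))ˣ :=
  MonoidHom.toHomUnits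
    { toFun := fun v => mulOp (mono v.toAdd 1)
      map_one' := by
        refine LinearMap.ext fun p => ?_
        simp [mulOp, mono_zero_one]
      map_mul' := by
        intro u v
        refine LinearMap.ext fun p => ?_
        simp [mulOp, ← mul_assoc, mono_mul] }

theorem mU_apply {n : ℕ} (v : Fin n →₀ ℤ) (p : Laur F n) :
    ((mU (Multiplicative.ofAdd v) : (Module.End F (Laur F n))ˣ) : Module.End F (Laur F n)) p
      = mono v 1 * p := rfl

theorem vanish {n : ℕ} (E : Module.End F (Laur F n)) (h1 : E 1 = 0)
    (h : ∀ j : Fin n, mU (Multiplicative.ofAdd (Finsupp.single j (-1))) ∈ moveGroup E) :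
    E = 0 := by
  have all : ∀ v : Fin n →₀ ℤ, mU (Multiplicative.ofAdd v) ∈ moveGroup E := by
    intro v
    induction v using Finsupp.induction_linear with
    | zero => rw [ofAdd_zero, map_one]; exact Subgroup.one_mem _
    | add u v hu hv => rw [ofAdd_add, map_mul]; exact Subgroup.mul_mem _ hu hv
    | single j a =>
      have : (Finsupp.single j a : Fin n →₀ ℤ) = (-a) • Finsupp.single j (-1) := by
        simp
      rw [this, ofAdd_zsmul, map_zpow]
      exact Subgroup.zpow_mem _ (h j) _
  refine end_ext fun v => ?_
  obtain ⟨G, hG⟩ := all v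
  have := congrArg (fun f : Module.End F (Laur F n) => f 1) hG
  simp only [Module.End.mul_apply, mU_apply, h1, map_zero, mul_one] at this
  simpa using this

theorem semi {n : ℕ} (S : Module.End F (Laur F n)) (g : (Fin n →₀ ℤ) → F)
    (f : (Fin n →₀ ℤ) → (Fin n →₀ ℤ)) (hg : ∀ u v, g (u + v) = g u * g v)
    (hf : ∀ u v, f (u + v) = f u + f v)
    (hS : ∀ v, S (mono v 1) = g v • mono (f v) 1) (u : Fin n →₀ ℤ) (p : Laur F n) :
    S (mono u 1 * p) = g u • (mono (f u) 1 * S p) := by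
  have : S * mulOp (mono u 1) = g u • (mulOp (mono (f u) 1) * S) := by
    refine end_ext fun v => ?_
    simp only [Module.End.mul_apply, LinearMap.smul_apply, mulOp, LinearMap.mulLeft_apply, hS,
      mono_mul, mul_smul_comm, hg, hf, smul_smul, mul_one]
  exact congrArg (fun f : Module.End F (Laur F n) => f p) this

theorem emd_add {n : ℕ} (w : Equiv.Perm (Fin n)) (u v : Fin n →₀ ℤ) :
    Finsupp.equivMapDomain w (u + v)
      = Finsupp.equivMapDomain w u + Finsupp.equivMapDomain w v := by
  ext i; simp

theorem W_mul {n : ℕ} (W : Equiv.Perm (Fin n) → Module.End F (Laur F n))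
    (hW : ∀ (w : Equiv.Perm (Fin n)) (v : Fin n →₀ ℤ) (r : F),
      W w (mono v r) = mono (Finsupp.equivMapDomain w v) r) (w) (u) (p) :
    W w (mono u 1 * p) = mono (Finsupp.equivMapDomain w u) 1 * W w p := by
  have := semi (W w) (fun _ => 1) (Finsupp.equivMapDomain w) (by simp) (emd_add w)
    (by simp [hW]) u p
  simpa using this

theorem delta_ne {n : ℕ} (i j : Fin n) (h : i ≠ j) : (Xel j - Xel i : Laur F n) ≠ 0 := by
  rw [sub_ne_zero]
  intro e
  have := congrArg (fun f : Laur F n => f.coeff (Finsupp.single i 1)) e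
  have h2 : (Finsupp.single j 1 : Fin n →₀ ℤ) ≠ Finsupp.single i 1 := by
    intro e
    have := congrArg (fun f : Fin n →₀ ℤ => f i) e
    simp [h] at this
  simp [Xel, mono, h2] at this

theorem xinv_mul {n : ℕ} (i : Fin n) : (mono (Finsupp.single i (-1)) 1 : Laur F n) * Xel i = 1 := by
  rw [Xel, mono_mul, ← Finsupp.single_add]; simp [mono_zero_one]

theorem T_facts {n : ℕ} (τ : F)
    (W : Equiv.Perm (Fin n) → Module.End F (Laur F n))
    (hW : ∀ (w : Equiv.Perm (Fin n)) (v : Fin n →₀ ℤ) (r : F),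
      W w (mono v r) = mono (Finsupp.equivMapDomain w v) r)
    (i j : Fin n) (hij : i ≠ j) (T : Module.End F (Laur F n))
    (hT : ∀ p : Laur F n, (Xel j - Xel i) * T p
        = (τ⁻¹ • Xel j - τ • Xel i) * W (Equiv.swap i j) p + (τ - τ⁻¹) • (Xel j * p)) :
    T 1 = τ • 1 ∧
    (∀ p, T (mono (Finsupp.single j (-1)) 1 * p)
      = mono (Finsupp.single i (-1)) 1 * (T p - (τ - τ⁻¹) • p)) ∧
    (∀ k, k ≠ i → k ≠ j → ∀ p, T (mono (Finsupp.single k (-1)) 1 * p)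
      = mono (Finsupp.single k (-1)) 1 * T p) := by
  have hd := delta_ne (F := F) i j hij
  refine ⟨?_, ?_, ?_⟩
  · apply mul_left_cancel₀ hd
    have : W (Equiv.swap i j) 1 = 1 := by
      rw [← mono_zero_one, hW]; congr 1
    rw [hT, this]
    simp only [mul_one, mul_smul_comm, smul_sub, sub_smul]
    abel
  · intro p
    apply mul_left_cancel₀ hd
    rw [hT, W_mul W hW, Finsupp.equivMapDomain_single, Equiv.swap_apply_right]
    have h := hT p
    have hi := xinv_mul (F := F) i
    have hj := xinv_mul (F := F) j
    generalize (mono (Finsupp.single i (-1)) 1 : Laur F n) = xi at *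
    generalize (mono (Finsupp.single j (-1)) 1 : Laur F n) = xj at *
    simp only [Algebra.smul_def] at *
    generalize algebraMap F (Laur F n) τ⁻¹ = t' at *
    generalize algebraMap F (Laur F n) τ = t at *
    generalize algebraMap F (Laur F n) (τ - τ⁻¹) = c at *
    linear_combination (-xi) * h + c * p * hj - c * p * hi
  · intro k hi hj p
    apply mul_left_cancel₀ hd
    rw [hT, W_mul W hW, Finsupp.equivMapDomain_single, Equiv.swap_apply_of_ne_of_ne hi hj]
    have h := hT p
    generalize (mono (Finsupp.single k (-1)) 1 : Laur F n) = xi at *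
    simp only [Algebra.smul_def] at *
    linear_combination (-xi) * h

end Concrete

theorem aF_succ_left {M : Type*} [Monoid M] (f : ℕ → M) (s l : ℕ) :
    aF f s (l+1) = f s * aF f (s+1) l := by
  simp [aF, List.range'_succ]

theorem dF_succ_left {M : Type*} [Monoid M] (f : ℕ → M) (s l : ℕ) :
    dF f s (l+1) = dF f (s+1) l * f s := by
  simp [dF, List.range'_succ]

theorem aF_succ_right {M : Type*} [Monoid M] (f : ℕ → M) (s l : ℕ) :
    aF f s (l+1) = aF f s l * f (s+l) := by
  simp [aF, List.range'_concat]

theorem aF_isUnit {M : Type*} [Monoid M] (f : ℕ → M) (l : ℕ) : ∀ s, 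
    (∀ k, s ≤ k → k < s + l → IsUnit (f k)) → IsUnit (aF f s l) := by
  induction l with
  | zero => intro s _; simp [aF]
  | succ l ih =>
    intro s h
    rw [aF_succ_left]
    exact (h s le_rfl (by omega)).mul (ih (s+1) fun k h1 h2 => h k (by omega) (by omega))

theorem zpowOp_units {M : Type*} [Monoid M] (u : Mˣ) (z : ℤ) :
    zpowOp (u : M) ((u⁻¹ : Mˣ) : M) z = ((u ^ z : Mˣ) : M) := by
  unfold zpowOp
  split_ifs with h
  · obtain ⟨k, rfl⟩ := Int.eq_ofNat_of_zero_le h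
    simp
  · obtain ⟨k, hk⟩ := Int.eq_ofNat_of_zero_le (by omega : 0 ≤ -z)
    obtain rfl : z = -(k : ℤ) := by omega
    simp

/-- The operators `𝒟_i = T⁺_{i,n-1} ⬝ (X_n⁻¹ ∑_{j=-l₁}^{l₂} a_j Y_n^j)
⬝ T⁻_{n-1,i}` pairwise commute (indices `0`-based). -/
theorem statement17
    (F : Type*) [Field F] (n : ℕ) [NeZero n]
    (q τ : F) (hq : q ≠ 0) (hqroot : ∀ m : ℕ, m ≠ 0 → q ^ m ≠ 1) (hτ : τ ≠ 0)
    -- the action of the symmetric group permuting the variables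
    (W : Equiv.Perm (Fin n) → Module.End F (Laur F n))
    (hW : ∀ (w : Equiv.Perm (Fin n)) (v : Fin n →₀ ℤ) (r : F),
      W w (mono v r) = mono (Finsupp.equivMapDomain w v) r)
    -- the Demazure–Lusztig operators `T_k` and their inverses `Ti k = T k + τ⁻¹ - τ`
    (T Ti : ℕ → Module.End F (Laur F n))
    (hT : ∀ (k : ℕ) (hk : k + 1 < n) (p : Laur F n),
      (Xel ⟨k + 1, hk⟩ - Xel ⟨k, Nat.lt_of_succ_lt hk⟩) * T k p
        = (τ⁻¹ • Xel ⟨k + 1, hk⟩ - τ • Xel ⟨k, Nat.lt_of_succ_lt hk⟩)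
            * W (Equiv.swap ⟨k, Nat.lt_of_succ_lt hk⟩ ⟨k + 1, hk⟩) p
          + (τ - τ⁻¹) • (Xel ⟨k + 1, hk⟩ * p))
    (hTi : ∀ k, Ti k = T k + (τ⁻¹ - τ) • (1 : Module.End F (Laur F n)))
    (hTinv : ∀ k, k + 1 < n → T k * Ti k = 1 ∧ Ti k * T k = 1)
    -- the operator `π⁻¹`
    (piInv : Module.End F (Laur F n))
    (hpiInv : ∀ (v : Fin n →₀ ℤ) (r : F),
      piInv (mono v r)
        = q ^ (v 0) • mono (Finsupp.equivMapDomain (finRotate n).symm v) r)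
    -- the operators `Y_i = T_i ⋯ T_{n-1} ⬝ π⁻¹ ⬝ T_1⁻¹ ⋯ T_{i-1}⁻¹` and their inverses
    (Y Yi : ℕ → Module.End F (Laur F n))
    (hY : ∀ i, Y i = aF T i (n - 1 - i) * piInv * aF Ti 0 i)
    (hYinv : ∀ i, i < n → Y i * Yi i = 1 ∧ Yi i * Y i = 1)
    -- the van Diejen-type operators `𝒟_i` with parameters `l₁, l₂` and `a_j`
    (l₁ l₂ : ℕ) (a : ℤ → F)
    (Dc : ℕ → Module.End F (Laur F n))
    (hDc : ∀ i, Dc i = aF T i (n - 1 - i)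
        * (XinvOp (n - 1) *
            ∑ j ∈ Finset.Icc (-(l₁ : ℤ)) (l₂ : ℤ), a j • zpowOp (Y (n - 1)) (Yi (n - 1)) j)
        * dF T i (n - 1 - i))
    :
    ∀ i j : ℕ, i < n → j < n → Dc i * Dc j = Dc j * Dc i := by

  obtain ⟨m, rfl⟩ : ∃ m, n = m + 1 := ⟨n - 1, by have := NeZero.ne n; omega⟩
  have hm : m + 1 - 1 = m := rfl
  simp only [hm] at *
  -- units
  have hunitT : ∀ k, k < m → ∃ u : (Module.End F (Laur F (m+1)))ˣ, (u : Module.End F _) = T k ∧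
      ((u⁻¹ : (Module.End F (Laur F (m+1)))ˣ) : Module.End F _) = Ti k := fun k hk =>
    ⟨⟨T k, Ti k, (hTinv k (by omega)).1, (hTinv k (by omega)).2⟩, rfl, rfl⟩
  have hunitP : IsUnit piInv := by
    have h0 := hY 0
    have hY0 : IsUnit (Y 0) := ⟨⟨Y 0, Yi 0, (hYinv 0 (by omega)).1, (hYinv 0 (by omega)).2⟩, rfl⟩
    have hA : IsUnit (aF T 0 (m - 0)) := aF_isUnit T _ 0 fun k _ hk => by
      obtain ⟨u, hu, _⟩ := hunitT k (by omega)
      exact ⟨u, hu⟩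
    obtain ⟨u, hu⟩ := hA
    rw [h0, ← hu] at hY0
    have : aF Ti 0 0 = 1 := by simp [aF]
    rw [this, mul_one, Units.isUnit_units_mul] at hY0
    exact hY0
  obtain ⟨P, hP⟩ := hunitP
  have hex : ∀ k, ∃ u : (Module.End F (Laur F (m+1)))ˣ, k < m → (u : Module.End F _) = T k ∧
      ((u⁻¹ : (Module.End F (Laur F (m+1)))ˣ) : Module.End F _) = Ti k := fun k => by
    by_cases hk : k < m
    · obtain ⟨u, hu⟩ := hunitT k hk
      exact ⟨u, fun _ => hu⟩
    · exact ⟨1, fun h => absurd h hk⟩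
  choose t ht using hex
  obtain ⟨x, hx⟩ : ∃ x : ℕ → (Module.End F (Laur F (m+1)))ˣ,
      ∀ j (h : j < m + 1), x j = mU (Multiplicative.ofAdd (Finsupp.single ⟨j, h⟩ (-1))) ∧
        ∀ j, ∃ v, x j = mU v := by
    refine ⟨fun j => if h : j < m + 1 then
      mU (Multiplicative.ofAdd (Finsupp.single ⟨j, h⟩ (-1))) else 1, fun j h => ⟨?_, ?_⟩⟩
    · simp [h]
    · intro j
      by_cases h : j < m + 1
      · exact ⟨_, dif_pos h⟩
      · exact ⟨1, by simp [h]⟩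
  have hTf := fun k (hk : k < m) => T_facts τ W hW ⟨k, by omega⟩ ⟨k+1, by omega⟩
    (by simp) (T k) (hT k (by omega))
  have hPm : ∀ (u : Fin (m+1) →₀ ℤ) (p : Laur F (m+1)), piInv (mono u 1 * p)
      = q ^ (u 0) • (mono (Finsupp.equivMapDomain (finRotate (m+1)).symm u) 1 * piInv p) :=
    semi piInv (fun u => q ^ (u 0)) (Finsupp.equivMapDomain (finRotate (m+1)).symm)
      (fun u v => by simp [zpow_add₀ hq]) (emd_add _) (fun v => hpiInv v 1)
  have hq' : IsUnit (q⁻¹ • (1 : Module.End F (Laur F (m+1)))) :=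
    ⟨⟨q⁻¹ • 1, q • 1, by simp [smul_smul, hq], by simp [smul_smul, hq]⟩, rfl⟩
  obtain ⟨Q, hQ⟩ := hq'
  let d : Daha F (Laur F (m+1)) m :=
    { t := t, x := x, P := P, Q := Q, c := τ - τ⁻¹, τ := τ, e := 1
      hinv := fun k hk => by
        rw [(ht k hk).2, (ht k hk).1, hTi]
        refine LinearMap.ext fun p => ?_
        simp only [LinearMap.add_apply, LinearMap.sub_apply, LinearMap.smul_apply,
          Module.End.one_apply, sub_smul]
        abel
      htx := fun k hk => by
        rw [← eq_mul_inv_iff_mul_eq]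
        refine Units.ext (LinearMap.ext fun p => ?_)
        rw [(hx k (by omega)).1, (hx (k+1) (by omega)).1]
        simp only [Units.val_mul, Module.End.mul_apply, mU_apply, (ht k hk).1, (ht k hk).2,
          (hTf k hk).2.1, hTi]
        simp only [LinearMap.add_apply, LinearMap.smul_apply, Module.End.one_apply, sub_smul]
        congr 1; abel
      htx' := fun k j hk hj h1 h2 => by
        refine Units.ext (LinearMap.ext fun p => ?_)
        rw [(hx j (by omega)).1]
        simp only [Units.val_mul, Module.End.mul_apply, mU_apply, (ht k hk).1]
        exact (hTf k hk).2.2 _ (by simpa using h1) (by simpa using h2) p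
      hxx := fun i j => by
        obtain ⟨u, hu⟩ := (hx 0 (by omega)).2 i
        obtain ⟨v, hv⟩ := (hx 0 (by omega)).2 j
        rw [hu, hv]
        exact (Commute.all u v).map mU
      hPx := fun j hj => by
        refine Units.ext (LinearMap.ext fun p => ?_)
        rw [(hx j (by omega)).1, (hx (j+1) (by omega)).1]
        simp only [Units.val_mul, Module.End.mul_apply, mU_apply, hP, hPm]
        have e : (finRotate (m+1)).symm ⟨j+1, by omega⟩ = ⟨j, by omega⟩ := by
          rw [Equiv.symm_apply_eq, finRotate_of_lt hj]
        rw [Finsupp.equivMapDomain_single, e, Finsupp.single_apply, if_neg (by simp [Fin.ext_iff])]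
        simp
      hPx0 := by
        refine Units.ext (LinearMap.ext fun p => ?_)
        rw [(hx 0 (by omega)).1, (hx m (by omega)).1]
        simp only [Units.val_mul, Module.End.mul_apply, mU_apply, hP, hPm, hQ]
        have e : (finRotate (m+1)).symm ⟨0, by omega⟩ = ⟨m, by omega⟩ := by
          rw [Equiv.symm_apply_eq, finRotate_last']
        rw [Finsupp.equivMapDomain_single, e, Finsupp.single_apply, if_pos (by simp [Fin.ext_iff])]
        simp
      hQ := fun u => by
        refine Units.ext ?_
        simp [hQ]
      hte := fun k hk => by rw [(ht k hk).1, (hTf k hk).1]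
      hPe := by
        rw [hP, ← mono_zero_one, hpiInv]
        have : Finsupp.equivMapDomain (finRotate (m+1)).symm (0 : Fin (m+1) →₀ ℤ) = 0 := by
          ext; simp
        rw [this]; simp
      hvan := fun E h1 h => vanish E h1 fun j => by
        have := h j (by omega)
        rw [(hx j j.2).1] at this
        exact this }
  have hdA : ∀ r, r ≤ m → aF Ti 0 r = (d.A r : Module.End F _) := by
    intro r
    induction r with
    | zero => intro _; simp [aF, Daha.A]
    | succ r ih =>
      intro h
      rw [aF_succ_right, ih (by omega), zero_add, ← (ht r (by omega)).2]
      rfl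
  have hYm : Y m = (d.y : Module.End F _) := by
    rw [hY, hdA m le_rfl, ← hP, Nat.sub_self]
    simp [aF, Daha.y, d]
  have hYim : Yi m = ((d.y⁻¹ : (Module.End F _)ˣ) : Module.End F _) := by
    have h := (hYinv m (by omega)).1
    rw [hYm] at h
    exact (Units.inv_eq_of_mul_eq_one_right h).symm
  have hfin := d.final (Finset.Icc (-(l₁ : ℤ)) (l₂ : ℤ)) a Dc
    (by
      rw [hDc, Nat.sub_self, hYm, hYim]
      have e : XinvOp m = (d.x m : Module.End F (Laur F (m+1))) := by
        change _ = ((x m : (Module.End F _)ˣ) : Module.End F (Laur F (m+1)))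
        rw [(hx m (by omega)).1, XinvOp, dif_pos (by omega)]
        rfl
      simp only [aF, dF, List.range'_zero, List.map_nil, List.prod_nil, List.reverse_nil, one_mul,
        mul_one, zpowOp_units, e])
    (by
      intro i hi
      have e : m - i = (m - (i+1)) + 1 := by omega
      rw [hDc i, hDc (i+1), e, aF_succ_left, dF_succ_left]
      change _ = ((t i : (Module.End F _)ˣ) : Module.End F (Laur F (m+1))) * _ *
        ((t i : (Module.End F _)ˣ) : Module.End F (Laur F (m+1)))
      rw [(ht i hi).1]
      simp only [mul_assoc])
  intro i j hi hj
  exact (hfin i j (by omega) (by omega)).eq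
end
end

section
/- For every p ∈ L^{𝔖_n}: (𝒟_1 + 𝒟_2 + ⋯ + 𝒟_n)(p) = a·τ^{1−n}·∑_{i=1}^n X_i^{−1}·(∏_{j≠i} (τ²X_i − X_j)/(X_i − X_j))·t_i(p) + b·τ^{1−n}·∑_{i=1}^n X_i^{−1}·(∏_{j≠i} (X_i − τ²X_j)/(X_i − X_j))·t_i^{−1}(p) + c·∑_{i=1}^n X_i^{−1}·p; that is, on symmetric Laurent polynomials the operator ∑_{i=1}^n 𝒟_i acts as the explicit q-difference operator M_{a,b,c} of van Diejen type. -/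
noncomputable section

variable {R : Type*} [CommRing R] {n : ℕ}

instance (F : Type*) [Field F] (n : ℕ) : IsDomain (Laur F n) :=
  NoZeroDivisors.to_isDomain _

/-- The embedding of the Laurent polynomial ring into its field of fractions. -/
def toFrac {F : Type*} [Field F] {n : ℕ} : Laur F n →+* FractionRing (Laur F n) :=
  algebraMap _ _

/-- A scalar of `F`, viewed inside the field of fractions of `L`. -/
def cF {F : Type*} [Field F] {n : ℕ} (x : F) : FractionRing (Laur F n) :=
  toFrac (algebraMap F (Laur F n) x)


section AbstractPart

variable {K : Type*} [Field K]

/-- coefficient product -/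
def cprod (r : K) (y : ℕ → K) (m i : ℕ) : K :=
  ∏ j ∈ (Finset.range m).erase i, ((r * y i - y j) / (y i - y j))

/-- partial sums -/
def psum (r : K) (y f : ℕ → K) (m : ℕ) : K :=
  ∑ i ∈ Finset.range m, cprod r y m i * f i

lemma cprod_succ_lt (r : K) (y : ℕ → K) {m i : ℕ} (h : i < m) :
    cprod r y (m + 1) i = (r * y i - y m) / (y i - y m) * cprod r y m i := by
  unfold cprod
  rw [Finset.range_add_one, Finset.erase_insert_of_ne (by omega), Finset.prod_insert (by simp)]

lemma cprod_self (r : K) (y : ℕ → K) (m : ℕ) :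
    cprod r y (m + 1) m = ∏ j ∈ Finset.range m, ((r * y m - y j) / (y m - y j)) := by
  unfold cprod
  rw [Finset.range_add_one, Finset.erase_insert (by simp)]

lemma psum_step (N : ℕ) (r : K) (y f : ℕ → K) (m : ℕ) (hm : m + 1 < N)
    (hy : ∀ i j, i < N → j < N → y i = y j → i = j)
    (s : K →+* K) (hr : s r = r)
    (hy1 : s (y m) = y (m + 1)) (hf1 : s (f m) = f (m + 1))
    (hy0 : ∀ i < m, s (y i) = y i) (hf0 : ∀ i < m, s (f i) = f i) :
    ((y m - r * y (m + 1)) * s (psum r y f (m + 1) - psum r y f m)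
      + (r - 1) * y m * (psum r y f (m + 1) - psum r y f m)) / (y m - y (m + 1))
      = psum r y f (m + 2) - psum r y f (m + 1) := by
  have hd : y m - y (m + 1) ≠ 0 := by
    intro h
    have := hy m (m + 1) (by omega) hm (sub_eq_zero.mp h)
    omega
  have hd' : y (m + 1) - y m ≠ 0 := by
    intro h
    exact hd (by rw [← neg_sub, h, neg_zero])
  have hdi : ∀ i < m, y i - y m ≠ 0 := by
    intro i hi h
    have := hy i m (by omega) (by omega) (sub_eq_zero.mp h)
    omega
  have hdi' : ∀ i < m, y i - y (m + 1) ≠ 0 := by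
    intro i hi h
    have := hy i (m + 1) (by omega) (by omega) (sub_eq_zero.mp h)
    omega
  set P : K := ∏ j ∈ Finset.range m, ((r * y m - y j) / (y m - y j)) with hP
  set Q : K := ∏ j ∈ Finset.range m, ((r * y (m + 1) - y j) / (y (m + 1) - y j)) with hQ
  have e1 : psum r y f (m + 1) = ∑ i ∈ Finset.range m,
      (r * y i - y m) / (y i - y m) * (cprod r y m i * f i) + P * f m := by
    unfold psum
    rw [Finset.sum_range_succ, cprod_self]
    congr 1
    refine Finset.sum_congr rfl fun i hi => ?_
    rw [cprod_succ_lt _ _ (Finset.mem_range.mp hi)]; ring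
  have e2 : psum r y f (m + 2) = ∑ i ∈ Finset.range m,
      (r * y i - y (m + 1)) / (y i - y (m + 1)) * ((r * y i - y m) / (y i - y m))
        * (cprod r y m i * f i)
      + (r * y m - y (m + 1)) / (y m - y (m + 1)) * P * f m
      + (r * y (m + 1) - y m) / (y (m + 1) - y m) * Q * f (m + 1) := by
    unfold psum
    rw [Finset.sum_range_succ, Finset.sum_range_succ, cprod_self, Finset.prod_range_succ,
      cprod_succ_lt _ _ (Nat.lt_succ_self m), cprod_self]
    congr 1
    · congr 1
      refine Finset.sum_congr rfl fun i hi => ?_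
      have := Finset.mem_range.mp hi
      rw [cprod_succ_lt _ _ (by omega), cprod_succ_lt _ _ this]; ring
    · rw [← hQ]; ring
  have hsc : ∀ i < m, s (cprod r y m i) = cprod r y m i := by
    intro i hi
    unfold cprod
    rw [map_prod]
    refine Finset.prod_congr rfl fun j hj => ?_
    have hj' := Finset.mem_range.mp (Finset.mem_of_mem_erase hj)
    simp [hr, hy0 i hi, hy0 j hj']
  have hsP : s P = Q := by
    rw [hP, hQ, map_prod]
    refine Finset.prod_congr rfl fun j hj => ?_
    have hj' := Finset.mem_range.mp hj
    simp [hr, hy1, hy0 j hj']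
  have e0s : s (psum r y f m) = ∑ i ∈ Finset.range m, (cprod r y m i * f i) := by
    unfold psum
    rw [map_sum]
    refine Finset.sum_congr rfl fun i hi => ?_
    have := Finset.mem_range.mp hi
    rw [map_mul, hsc i this, hf0 i this]
  have e1s : s (psum r y f (m + 1)) = ∑ i ∈ Finset.range m,
      (r * y i - y (m + 1)) / (y i - y (m + 1)) * (cprod r y m i * f i) + Q * f (m + 1) := by
    rw [e1, map_add, map_mul, hsP, hf1, map_sum]
    congr 1
    refine Finset.sum_congr rfl fun i hi => ?_
    have := Finset.mem_range.mp hi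
    simp [hr, hy1, hy0 i this, hsc i this, hf0 i this]
  have e0 : psum r y f m = ∑ i ∈ Finset.range m, (cprod r y m i * f i) := rfl
  rw [map_sub, e0s, e1s, e2, e1, e0, div_eq_iff hd]
  have key : (y m - r * y (m + 1)) * (∑ i ∈ Finset.range m,
      (r * y i - y (m + 1)) / (y i - y (m + 1)) * (cprod r y m i * f i)
        - ∑ i ∈ Finset.range m, (cprod r y m i * f i))
      + (r - 1) * y m * (∑ i ∈ Finset.range m,
      (r * y i - y m) / (y i - y m) * (cprod r y m i * f i)
        - ∑ i ∈ Finset.range m, (cprod r y m i * f i))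
      = (∑ i ∈ Finset.range m,
      (r * y i - y (m + 1)) / (y i - y (m + 1)) * ((r * y i - y m) / (y i - y m))
        * (cprod r y m i * f i) - ∑ i ∈ Finset.range m,
      (r * y i - y m) / (y i - y m) * (cprod r y m i * f i)) * (y m - y (m + 1)) := by
    simp only [← Finset.sum_sub_distrib, Finset.mul_sum, Finset.sum_mul, ← Finset.sum_add_distrib]
    refine Finset.sum_congr rfl fun i hi => ?_
    have hi' := Finset.mem_range.mp hi
    have h1 := hdi i hi'
    have h2 := hdi' i hi'
    generalize cprod r y m i * f i = z
    field_simp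
    ring
  have k2 : (r * y m - y (m + 1)) / (y m - y (m + 1)) * (y m - y (m + 1)) = r * y m - y (m + 1) :=
    div_mul_cancel₀ _ hd
  have k3 : (r * y (m + 1) - y m) / (y (m + 1) - y m) * (y m - y (m + 1))
      = - (r * y (m + 1) - y m) := by
    field_simp
    ring
  linear_combination key - P * f m * k2 - Q * f (m + 1) * k3

lemma abs_sum (N : ℕ) (r : K) (y f : ℕ → K) (g : ℕ → K)
    (hy : ∀ i j, i < N → j < N → y i = y j → i = j)
    (s : ℕ → K →+* K) (hr : ∀ m, s m r = r)
    (hy1 : ∀ m, m + 1 < N → s m (y m) = y (m + 1))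
    (hf1 : ∀ m, m + 1 < N → s m (f m) = f (m + 1))
    (hy0 : ∀ m, m + 1 < N → ∀ i < m, s m (y i) = y i)
    (hf0 : ∀ m, m + 1 < N → ∀ i < m, s m (f i) = f i)
    (hg0 : g 0 = f 0)
    (hg : ∀ m, m + 1 < N → g (m + 1) = ((y m - r * y (m + 1)) * s m (g m)
      + (r - 1) * y m * g m) / (y m - y (m + 1))) :
    ∑ k ∈ Finset.range N, g k = psum r y f N := by
  have h1 : ∀ m, m < N → g m = psum r y f (m + 1) - psum r y f m := by
    intro m
    induction m with
    | zero => intro _; simp [psum, cprod, hg0]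
    | succ m ih =>
      intro hm
      rw [hg m hm, ih (by omega)]
      exact psum_step N r y f m hm hy (s m) (hr m) (hy1 m hm) (hf1 m hm) (hy0 m hm) (hf0 m hm)
  rw [Finset.sum_congr rfl (fun k hk => h1 k (Finset.mem_range.mp hk)), Finset.sum_range_sub]
  simp [psum]

lemma abs_fin {n : ℕ} [NeZero n] (E : Equiv.Perm (Fin n)) (r : K) (x f : Fin n → K)
    (hx : Function.Injective x)
    (s : Equiv.Perm (Fin n) → K →+* K) (hr : ∀ w, s w r = r)
    (hsx : ∀ w i, s w (x i) = x (w i)) (hsf : ∀ w i, s w (f i) = f (w i))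
    (g : ℕ → K) (hg0 : g 0 = f (E 0))
    (hg : ∀ m, m + 1 < n → g (m + 1) =
      ((x (E (Fin.ofNat n m)) - r * x (E (Fin.ofNat n (m + 1)))) *
          s (Equiv.swap (E (Fin.ofNat n m)) (E (Fin.ofNat n (m + 1)))) (g m)
      + (r - 1) * x (E (Fin.ofNat n m)) * g m)
        / (x (E (Fin.ofNat n m)) - x (E (Fin.ofNat n (m + 1))))) :
    ∑ k ∈ Finset.range n, g k =
      ∑ i, (∏ j ∈ Finset.univ.erase i, ((r * x i - x j) / (x i - x j))) * f i := by
  have hinj : ∀ i j, i < n → j < n → Fin.ofNat n i = Fin.ofNat n j → i = j := by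
    intro i j hi hj h
    have := congrArg Fin.val h
    simpa [Fin.val_ofNat, Nat.mod_eq_of_lt hi, Nat.mod_eq_of_lt hj] using this
  have hfix : ∀ m, m + 1 < n → ∀ i < m,
      Equiv.swap (E (Fin.ofNat n m)) (E (Fin.ofNat n (m + 1))) (E (Fin.ofNat n i))
        = E (Fin.ofNat n i) := by
    intro m hm i hi
    apply Equiv.swap_apply_of_ne_of_ne
    · intro h
      have := hinj _ _ (by omega) (by omega) (E.injective h)
      omega
    · intro h
      have := hinj _ _ (by omega) (by omega) (E.injective h)
      omega
  rw [abs_sum n r (fun k => x (E (Fin.ofNat n k))) (fun k => f (E (Fin.ofNat n k))) g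
    (fun i j hi hj h => hinj i j hi hj (E.injective (hx h)))
    (fun m => s (Equiv.swap (E (Fin.ofNat n m)) (E (Fin.ofNat n (m + 1))))) (fun m => hr _)
    (fun m hm => by simp [hsx]) (fun m hm => by simp [hsf])
    (fun m hm i hi => by simp only [hsx, hfix m hm i hi])
    (fun m hm i hi => by simp only [hsf, hfix m hm i hi])
    (by simpa using hg0) hg]
  unfold psum cprod
  rw [Finset.sum_range, ← Equiv.sum_comp E (fun i =>
    (∏ j ∈ Finset.univ.erase i, ((r * x i - x j) / (x i - x j))) * f i)]
  refine Finset.sum_congr rfl fun i _ => ?_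
  have hi : ∀ i : Fin n, Fin.ofNat n (i : ℕ) = i := by
    intro i; ext; simp
  simp only [hi]
  congr 1
  symm
  refine Finset.prod_bij (fun j _ => ((E.symm j : Fin n) : ℕ)) ?_ ?_ ?_ ?_
  · intro j hj
    simp only [Finset.mem_erase, Finset.mem_univ, and_true, Finset.mem_range] at hj ⊢
    refine ⟨fun h => hj ?_, Fin.is_lt _⟩
    rw [← Fin.ext h]; simp
  · intro j _ k _ h
    exact E.symm.injective (Fin.ext h)
  · intro k hk
    simp only [Finset.mem_erase, Finset.mem_range] at hk
    refine ⟨E ⟨k, hk.2⟩, ?_, by simp⟩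
    simp only [Finset.mem_erase, Finset.mem_univ, and_true]
    intro h
    exact hk.1 (congrArg Fin.val (E.injective h))
  · intro j _
    simp

lemma prod_scale {ι : Type*} (s : Finset ι) (c : K) (A B : ι → K)
    (h : ∀ j ∈ s, A j = c * B j) : ∏ j ∈ s, A j = c ^ s.card * ∏ j ∈ s, B j := by
  rw [Finset.prod_congr rfl h, Finset.prod_mul_distrib, Finset.prod_const]

end AbstractPart

section ConcretePart

variable {F : Type*} [Field F] {n : ℕ}

lemma laur_ext {M : Type*} [AddCommMonoid M] [Module F M] (f g : Laur F n →ₗ[F] M)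
    (h : ∀ v r, f (mono v r) = g (mono v r)) : f = g := by
  ext v
  simpa [mono] using h v 1

/-- permutation of variables as a ring automorphism -/
def sig (w : Equiv.Perm (Fin n)) : Laur F n ≃ₐ[F] Laur F n :=
  AddMonoidAlgebra.domCongr F F (Finsupp.domCongr w)

lemma sig_mono (w : Equiv.Perm (Fin n)) (v : Fin n →₀ ℤ) (r : F) :
    sig w (mono v r) = mono (Finsupp.equivMapDomain w v) r := by
  simp [sig, mono]

lemma sig_X (w : Equiv.Perm (Fin n)) (i : Fin n) :
    sig w (Xel i : Laur F n) = Xel (w i) := by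
  simp [Xel, sig_mono, Finsupp.equivMapDomain_single]

lemma sig_Xinv (w : Equiv.Perm (Fin n)) (i : Fin n) :
    sig w (XinvEl i : Laur F n) = XinvEl (w i) := by
  rw [XinvEl, sig_mono, Finsupp.equivMapDomain_single, XinvEl]

/-- permutation of variables on the field of fractions -/
def sigK (w : Equiv.Perm (Fin n)) : FractionRing (Laur F n) →+* FractionRing (Laur F n) :=
  (IsFractionRing.ringEquivOfRingEquiv (sig (F := F) w).toRingEquiv).toRingHom

lemma sigK_toFrac (w : Equiv.Perm (Fin n)) (x : Laur F n) :
    sigK w (toFrac x) = toFrac (sig w x) := by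
  unfold sigK toFrac
  exact IsFractionRing.ringEquivOfRingEquiv_algebraMap _ _

lemma sigK_cF (w : Equiv.Perm (Fin n)) (x : F) : sigK (n := n) w (cF x) = cF x := by
  unfold cF
  rw [sigK_toFrac, AlgEquiv.commutes]

lemma toFrac_inj : Function.Injective (toFrac : Laur F n →+* FractionRing (Laur F n)) :=
  IsFractionRing.injective _ _

lemma toFrac_smul (x : F) (p : Laur F n) : toFrac (x • p) = cF x * toFrac p := by
  rw [Algebra.smul_def, map_mul, cF]

lemma cF_mul (x y : F) : (cF (x * y) : FractionRing (Laur F n)) = cF x * cF y := by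
  simp only [cF, map_mul]

lemma cF_sub (x y : F) : (cF (x - y) : FractionRing (Laur F n)) = cF x - cF y := by
  simp [cF]

lemma cF_one : (cF 1 : FractionRing (Laur F n)) = 1 := by
  simp only [cF, map_one]

lemma cF_pow (x : F) (k : ℕ) : (cF (x ^ k) : FractionRing (Laur F n)) = cF x ^ k := by
  simp only [cF, map_pow]

lemma cF_inv (x : F) : (cF x⁻¹ : FractionRing (Laur F n)) = (cF x)⁻¹ := by
  change ((toFrac (n := n)).comp (algebraMap F (Laur F n))) x⁻¹ = _
  rw [map_inv₀]; rfl

lemma cF_ne (x : F) (hx : x ≠ 0) : (cF x : FractionRing (Laur F n)) ≠ 0 := by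
  change ((toFrac (n := n)).comp (algebraMap F (Laur F n))) x ≠ 0
  exact (map_ne_zero _).mpr hx

lemma X_inj : Function.Injective (fun i : Fin n => toFrac (Xel i : Laur F n)) := by
  intro i j h
  have h1 : (Xel i : Laur F n) = Xel j := toFrac_inj h
  unfold Xel mono at h1
  have h2 := (AddMonoidAlgebra.single_left_inj (one_ne_zero (α := F))).mp h1
  exact (Finsupp.single_left_inj (one_ne_zero)).mp h2

lemma X_mul_inv (i : Fin n) : (Xel i : Laur F n) * XinvEl i = 1 := by
  unfold Xel XinvEl mono
  rw [AddMonoidAlgebra.single_mul_single, ← Finsupp.single_add]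
  simp [AddMonoidAlgebra.one_def]

lemma X_ne (i : Fin n) : toFrac (Xel i : Laur F n) ≠ 0 := by
  intro h
  have := congrArg toFrac (X_mul_inv (F := F) i)
  rw [map_mul, h] at this
  simp at this

lemma Xinv_eq (i : Fin n) : toFrac (XinvEl i : Laur F n) = (toFrac (Xel i))⁻¹ := by
  refine eq_inv_of_mul_eq_one_left ?_
  rw [← map_mul, mul_comm, X_mul_inv, map_one]

lemma sig_swap_swap (i j : Fin n) (p : Laur F n) :
    sig (Equiv.swap i j) (sig (Equiv.swap i j) p) = p := by
  have : (sig (F := F) (Equiv.swap i j)).toLinearMap ∘ₗ (sig (Equiv.swap i j)).toLinearMap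
      = LinearMap.id := by
    apply laur_ext
    intro v r
    simp only [LinearMap.comp_apply, AlgEquiv.toLinearMap_apply, sig_mono, LinearMap.id_apply]
    congr 1
    ext k
    simp [Finsupp.equivMapDomain_apply]
  exact LinearMap.congr_fun this p

lemma aF_succ {M : Type*} [Monoid M] (f : ℕ → M) (s l : ℕ) :
    aF f s (l + 1) = f s * aF f (s + 1) l := by
  simp [aF, List.range'_succ]

lemma aF_succ' {M : Type*} [Monoid M] (f : ℕ → M) (s l : ℕ) :
    aF f s (l + 1) = aF f s l * f (s + l) := by
  simp [aF, List.range'_concat]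

lemma dF_succ {M : Type*} [Monoid M] (f : ℕ → M) (s l : ℕ) :
    dF f s (l + 1) = dF f (s + 1) l * f s := by
  simp [dF, List.range'_succ]

lemma dF_succ' {M : Type*} [Monoid M] (f : ℕ → M) (s l : ℕ) :
    dF f s (l + 1) = f (s + l) * dF f s l := by
  simp [dF, List.range'_concat]

lemma aF_zero {M : Type*} [Monoid M] (f : ℕ → M) (s : ℕ) : aF f s 0 = 1 := by simp [aF]

lemma dF_zero {M : Type*} [Monoid M] (f : ℕ → M) (s : ℕ) : dF f s 0 = 1 := by simp [dF]

/-- dF composes. -/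
lemma dF_add {M : Type*} [Monoid M] (f : ℕ → M) (s l k : ℕ) :
    dF f s (l + k) = dF f (s + l) k * dF f s l := by
  induction k with
  | zero => simp [dF_zero]
  | succ k ih => rw [← add_assoc, dF_succ', ih, dF_succ', mul_assoc, add_assoc]

lemma aF_dF_inv {M : Type*} [Monoid M] (f g : ℕ → M) (N : ℕ) (h : ∀ k, k < N → g k * f k = 1)
    (l : ℕ) (hl : l ≤ N) : aF g 0 l * dF f 0 l = 1 := by
  induction l with
  | zero => simp [aF_zero, dF_zero]
  | succ l ih =>
    rw [aF_succ', dF_succ', zero_add, mul_assoc, ← mul_assoc (g l), h l (by omega), one_mul,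
      ih (by omega)]

lemma aF_eig (f : ℕ → Module.End F (Laur F n)) (e : F) (p : Laur F n) (N : ℕ)
    (h : ∀ k, k < N → f k p = e • p) (s l : ℕ) (hl : s + l ≤ N) : aF f s l p = e ^ l • p := by
  induction l with
  | zero => simp [aF_zero]
  | succ l ih =>
    rw [aF_succ', Module.End.mul_apply, h _ (by omega), map_smul, ih (by omega), smul_smul, pow_succ']

lemma dF_eig (f : ℕ → Module.End F (Laur F n)) (e : F) (p : Laur F n) (N : ℕ)
    (h : ∀ k, k < N → f k p = e • p) (s l : ℕ) (hl : s + l ≤ N) : dF f s l p = e ^ l • p := by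
  induction l with
  | zero => simp [dF_zero]
  | succ l ih =>
    rw [dF_succ', Module.End.mul_apply, ih (by omega), map_smul, h _ (by omega), smul_smul, pow_succ]

/-- conjugation collapses -/
lemma conj_collapse {M : Type*} [Monoid M] (T X : ℕ → M) (N : ℕ)
    (h : ∀ k, k < N → T k * X (k + 1) * T k = X k) (i l : ℕ) (hl : i + l ≤ N) :
    aF T i l * X (i + l) * dF T i l = X i := by
  induction l with
  | zero => simp [aF_zero, dF_zero]
  | succ l ih =>
    rw [aF_succ', dF_succ', ← ih (by omega), ← h (i + l) (by omega)]
    simp only [mul_assoc, add_assoc]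

lemma push_collapse {M : Type*} [Monoid M] (T Ti X : ℕ → M) (N : ℕ)
    (h : ∀ k, k < N → X (k + 1) * T k = Ti k * X k) (i : ℕ) (hl : i ≤ N) :
    X i * dF T 0 i = dF Ti 0 i * X 0 := by
  induction i with
  | zero => simp [dF_zero]
  | succ i ih =>
    rw [dF_succ', dF_succ', zero_add, ← mul_assoc, h i (by omega), mul_assoc, ih (by omega),
      mul_assoc]

end ConcretePart

section OperatorPart

variable {F : Type*} [Field F] {n : ℕ}

/-- the defining relation of the Demazure–Lusztig operators -/
def IsDL (τ : F) (T : ℕ → Module.End F (Laur F n)) : Prop :=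
  ∀ (k : ℕ) (hk : k + 1 < n) (p : Laur F n),
      (Xel ⟨k + 1, hk⟩ - Xel ⟨k, Nat.lt_of_succ_lt hk⟩) * T k p
        = (τ⁻¹ • Xel ⟨k + 1, hk⟩ - τ • Xel ⟨k, Nat.lt_of_succ_lt hk⟩)
            * sig (Equiv.swap ⟨k, Nat.lt_of_succ_lt hk⟩ ⟨k + 1, hk⟩) p
          + (τ - τ⁻¹) • (Xel ⟨k + 1, hk⟩ * p)

lemma X_sub_ne {i j : Fin n} (h : i ≠ j) :
    toFrac (Xel i : Laur F n) - toFrac (Xel j) ≠ 0 := by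
  intro h'
  exact h (X_inj (F := F) (sub_eq_zero.mp h'))

lemma TK {τ : F} {T : ℕ → Module.End F (Laur F n)} (hT : IsDL τ T)
    (k : ℕ) (hk : k + 1 < n) (p : Laur F n) :
    toFrac (T k p) =
      (((cF τ)⁻¹ * toFrac (Xel ⟨k + 1, hk⟩) - cF τ * toFrac (Xel ⟨k, Nat.lt_of_succ_lt hk⟩))
        * sigK (Equiv.swap ⟨k, Nat.lt_of_succ_lt hk⟩ ⟨k + 1, hk⟩) (toFrac p)
        + (cF τ - (cF τ)⁻¹) * (toFrac (Xel ⟨k + 1, hk⟩) * toFrac p))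
      / (toFrac (Xel ⟨k + 1, hk⟩) - toFrac (Xel ⟨k, Nat.lt_of_succ_lt hk⟩)) := by
  have hne : toFrac (Xel ⟨k + 1, hk⟩ : Laur F n)
      - toFrac (Xel ⟨k, Nat.lt_of_succ_lt hk⟩) ≠ 0 := X_sub_ne (by simp)
  rw [eq_div_iff hne, mul_comm, ← map_sub, ← map_mul, hT k hk p, sigK_toFrac, map_add, map_mul,
    map_sub, toFrac_smul, toFrac_smul, toFrac_smul, cF_sub, cF_inv, map_mul]

lemma T_eig {τ : F} {T : ℕ → Module.End F (Laur F n)} (hτ : τ ≠ 0) (hT : IsDL τ T)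
    (k : ℕ) (hk : k + 1 < n) (p : Laur F n) (hp : ∀ w, sig w p = p) : T k p = τ • p := by
  apply toFrac_inj
  rw [TK hT k hk, sigK_toFrac, hp, toFrac_smul]
  have hne : toFrac (Xel ⟨k + 1, hk⟩ : Laur F n)
      - toFrac (Xel ⟨k, Nat.lt_of_succ_lt hk⟩) ≠ 0 := X_sub_ne (by simp)
  have hc := cF_ne (n := n) τ hτ
  field_simp
  ring

lemma XinvOp_apply (k : ℕ) (hk : k < n) (p : Laur F n) :
    XinvOp k p = XinvEl ⟨k, hk⟩ * p := by
  simp [XinvOp, hk, mulOp]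

lemma T_X_T {τ : F} {T : ℕ → Module.End F (Laur F n)} (hτ : τ ≠ 0) (hT : IsDL τ T)
    (k : ℕ) (hk : k + 1 < n) : T k * XinvOp (k + 1) * T k = XinvOp k := by
  refine LinearMap.ext fun p => ?_
  apply toFrac_inj
  rw [Module.End.mul_apply, Module.End.mul_apply, XinvOp_apply _ hk,
    XinvOp_apply _ (Nat.lt_of_succ_lt hk), TK hT k hk]
  simp only [map_mul, TK hT k hk, map_div₀, map_sub, map_add, map_inv₀, sigK_cF, sigK_toFrac,
    sig_X, Equiv.swap_apply_left, Equiv.swap_apply_right, sig_swap_swap, Xinv_eq]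
  have hne : toFrac (Xel ⟨k + 1, hk⟩ : Laur F n)
      - toFrac (Xel ⟨k, Nat.lt_of_succ_lt hk⟩) ≠ 0 := X_sub_ne (by simp)
  have hne' : toFrac (Xel ⟨k, Nat.lt_of_succ_lt hk⟩ : Laur F n)
      - toFrac (Xel ⟨k + 1, hk⟩) ≠ 0 := X_sub_ne (by simp)
  have hc := cF_ne (n := n) τ hτ
  have h0 := X_ne (F := F) (⟨k + 1, hk⟩ : Fin n)
  have h1 := X_ne (F := F) (⟨k, Nat.lt_of_succ_lt hk⟩ : Fin n)
  generalize toFrac (Xel ⟨k + 1, hk⟩ : Laur F n) = x at *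
  generalize toFrac (Xel ⟨k, Nat.lt_of_succ_lt hk⟩ : Laur F n) = y at *
  generalize toFrac ((sig (Equiv.swap ⟨k, Nat.lt_of_succ_lt hk⟩ ⟨k + 1, hk⟩)) p) = u
  have e : y - x = -(x - y) := by ring
  rw [e]
  field_simp
  ring

lemma sig_t {t : Fin n → Module.End F (Laur F n)} (e : ℤ → F)
    (ht : ∀ (i : Fin n) (v : Fin n →₀ ℤ) (r : F), t i (mono v r) = e (v i) • mono v r)
    (w : Equiv.Perm (Fin n)) (i : Fin n) (p : Laur F n) (hp : sig w p = p) :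
    sig w (t i p) = t (w i) p := by
  have : (sig (F := F) w).toLinearMap ∘ₗ t i = t (w i) ∘ₗ (sig w).toLinearMap := by
    apply laur_ext
    intro v r
    simp [sig_mono, ht, Finsupp.equivMapDomain_apply]
  have h := LinearMap.congr_fun this p
  simpa [hp] using h

lemma piInv_last (m : ℕ) (q : F) (piInv : Module.End F (Laur F (m + 1)))
    (hpiInv : ∀ (v : Fin (m + 1) →₀ ℤ) (r : F),
      piInv (mono v r)
        = q ^ (v 0) • mono (Finsupp.equivMapDomain (finRotate (m + 1)).symm v) r)
    (t : Fin (m + 1) → Module.End F (Laur F (m + 1)))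
    (ht : ∀ i (v : Fin (m + 1) →₀ ℤ) (r : F), t i (mono v r) = q ^ (v i) • mono v r)
    (p : Laur F (m + 1)) (hp : ∀ w, sig w p = p) :
    piInv p = t (Fin.last m) p := by
  have : piInv = t (Fin.last m) ∘ₗ (sig (finRotate (m + 1)).symm).toLinearMap := by
    apply laur_ext
    intro v r
    simp only [LinearMap.comp_apply, AlgEquiv.toLinearMap_apply, sig_mono, ht, hpiInv,
      Finsupp.equivMapDomain_apply, Equiv.symm_symm, finRotate_last]
  rw [this]
  simp [hp]

lemma piInv_ti (m : ℕ) (q : F) (hq : q ≠ 0) (piInv : Module.End F (Laur F (m + 1)))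
    (hpiInv : ∀ (v : Fin (m + 1) →₀ ℤ) (r : F),
      piInv (mono v r)
        = q ^ (v 0) • mono (Finsupp.equivMapDomain (finRotate (m + 1)).symm v) r)
    (ti : Fin (m + 1) → Module.End F (Laur F (m + 1)))
    (hti : ∀ i (v : Fin (m + 1) →₀ ℤ) (r : F), ti i (mono v r) = q ^ (-(v i)) • mono v r)
    (p : Laur F (m + 1)) (hp : ∀ w, sig w p = p) :
    piInv (ti 0 p) = p := by
  have : piInv ∘ₗ ti 0 = (sig (finRotate (m + 1)).symm).toLinearMap := by
    apply laur_ext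
    intro v r
    simp only [LinearMap.comp_apply, AlgEquiv.toLinearMap_apply, sig_mono, hti, hpiInv, map_smul,
      smul_smul]
    rw [← zpow_add₀ hq]
    simp
  have h := LinearMap.congr_fun this p
  simpa [hp] using h

/-- the `a`-part -/
lemma a_part {m : ℕ} {τ : F} {T : ℕ → Module.End F (Laur F (m + 1))} (hτ : τ ≠ 0) (hT : IsDL τ T)
    (f : Fin (m + 1) → Laur F (m + 1)) (hf : ∀ w i, sig w (f i) = f (w i)) :
    ∑ i ∈ Finset.range (m + 1), cF τ ^ (m - i) * toFrac (aF T i (m - i) (f (Fin.last m)))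
      = ∑ i, (∏ j ∈ Finset.univ.erase i, ((cF τ ^ 2 * toFrac (Xel i) - toFrac (Xel j))
          / (toFrac (Xel i) - toFrac (Xel j)))) * toFrac (f i) := by
  rw [← Finset.sum_range_reflect]
  rw [← abs_fin Fin.revPerm (cF τ ^ 2) (fun i => toFrac (Xel i : Laur F (m + 1)))
    (fun i => toFrac (f i)) X_inj (fun w => sigK w) (fun w => by rw [map_pow, sigK_cF])
    (fun w i => by rw [sigK_toFrac, sig_X]) (fun w i => by rw [sigK_toFrac, hf])
    (fun k => cF τ ^ k * toFrac (aF T (m - k) k (f (Fin.last m))))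
    (by simp [aF_zero])]
  · refine Finset.sum_congr rfl fun i hi => ?_
    have := Finset.mem_range.mp hi
    have e1 : m + 1 - 1 - i = m - i := by omega
    have e2 : m - (m - i) = i := by omega
    rw [e1, e2]
  · intro k hk
    have e1 : m - k = (m - (k + 1)) + 1 := by omega
    have hk1 : (m - (k + 1)) + 1 < m + 1 := by omega
    have E1 : Fin.revPerm (Fin.ofNat (m + 1) k) = ⟨(m - (k + 1)) + 1, hk1⟩ := by
      ext
      simp [Fin.val_rev, Nat.mod_eq_of_lt (show k < m + 1 by omega)]
      omega
    have E2 : Fin.revPerm (Fin.ofNat (m + 1) (k + 1))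
        = ⟨m - (k + 1), Nat.lt_of_succ_lt hk1⟩ := by
      ext
      simp only [Fin.revPerm_apply, Fin.val_rev, Fin.val_ofNat,
        Nat.mod_eq_of_lt (show k + 1 < m + 1 by omega)]
      omega
    rw [E1, E2, Equiv.swap_comm, aF_succ, Module.End.mul_apply, TK hT _ hk1, map_mul, map_pow,
      sigK_cF, e1]
    have hne : toFrac (Xel ⟨(m - (k + 1)) + 1, hk1⟩ : Laur F (m + 1))
      - toFrac (Xel ⟨m - (k + 1), Nat.lt_of_succ_lt hk1⟩) ≠ 0 := X_sub_ne (by simp)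
    have hc := cF_ne (n := m + 1) τ hτ
    field_simp
    try ring

/-- the `b`-part -/
lemma b_part {m : ℕ} {τ : F} {T Ti : ℕ → Module.End F (Laur F (m + 1))} (hτ : τ ≠ 0)
    (hT : IsDL τ T)
    (hTi : ∀ k, Ti k = T k + (τ⁻¹ - τ) • (1 : Module.End F (Laur F (m + 1))))
    (f : Fin (m + 1) → Laur F (m + 1)) (hf : ∀ w i, sig w (f i) = f (w i)) :
    ∑ i ∈ Finset.range (m + 1), ((cF τ)⁻¹) ^ i * toFrac (dF Ti 0 i (f 0))
      = ∑ i, (∏ j ∈ Finset.univ.erase i, ((((cF τ)⁻¹) ^ 2 * toFrac (Xel i) - toFrac (Xel j))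
          / (toFrac (Xel i) - toFrac (Xel j)))) * toFrac (f i) := by
  rw [← abs_fin (Equiv.refl _) (((cF τ)⁻¹) ^ 2) (fun i => toFrac (Xel i : Laur F (m + 1)))
    (fun i => toFrac (f i)) X_inj (fun w => sigK w)
    (fun w => by rw [map_pow, map_inv₀, sigK_cF])
    (fun w i => by rw [sigK_toFrac, sig_X]) (fun w i => by rw [sigK_toFrac, hf])
    (fun k => ((cF τ)⁻¹) ^ k * toFrac (dF Ti 0 k (f 0)))
    (by simp [dF_zero])]
  intro k hk
  have E1 : (Equiv.refl _) (Fin.ofNat (m + 1) k) = ⟨k, Nat.lt_of_succ_lt hk⟩ := by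
    ext
    simp [Nat.mod_eq_of_lt (show k < m + 1 by omega)]
  have E2 : (Equiv.refl _) (Fin.ofNat (m + 1) (k + 1)) = ⟨k + 1, hk⟩ := by
    ext
    simp only [Equiv.refl_apply, Fin.val_ofNat, Nat.mod_eq_of_lt hk]
  rw [E1, E2, dF_succ', zero_add, Module.End.mul_apply, hTi, LinearMap.add_apply,
    LinearMap.smul_apply, Module.End.one_apply, map_add, TK hT _ hk, toFrac_smul, cF_sub, cF_inv,
    map_mul, map_pow, map_inv₀, sigK_cF]
  have hne : toFrac (Xel ⟨k + 1, hk⟩ : Laur F (m + 1))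
      - toFrac (Xel ⟨k, Nat.lt_of_succ_lt hk⟩) ≠ 0 := X_sub_ne (by simp)
  have hne' : toFrac (Xel ⟨k, Nat.lt_of_succ_lt hk⟩ : Laur F (m + 1))
      - toFrac (Xel ⟨k + 1, hk⟩) ≠ 0 := X_sub_ne (by simp)
  have hc := cF_ne (n := m + 1) τ hτ
  generalize toFrac (Xel ⟨k + 1, hk⟩ : Laur F (m + 1)) = x at *
  generalize toFrac (Xel ⟨k, Nat.lt_of_succ_lt hk⟩ : Laur F (m + 1)) = y at *
  have e : y - x = -(x - y) := by ring
  rw [e]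
  rw [pow_succ]
  generalize ((cF τ : FractionRing (Laur F (m + 1)))⁻¹) ^ k = c
  field_simp
  ring

end OperatorPart
set_option maxHeartbeats 4000000 in
/-- On `𝔖_n`-invariant Laurent polynomials `p`, the operator
`𝒟_1 + ⋯ + 𝒟_n` acts as the explicit van Diejen-type `q`-difference operator `M_{a,b,c}`
(the identity is stated in the field of fractions of `L`, where the rational coefficients
of `M_{a,b,c}` live). -/
theorem statement19
    (F : Type*) [Field F] (n : ℕ) [NeZero n]
    (q τ : F) (hq : q ≠ 0) (hqroot : ∀ m : ℕ, m ≠ 0 → q ^ m ≠ 1) (hτ : τ ≠ 0)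
    -- the action of the symmetric group permuting the variables
    (W : Equiv.Perm (Fin n) → Module.End F (Laur F n))
    (hW : ∀ (w : Equiv.Perm (Fin n)) (v : Fin n →₀ ℤ) (r : F),
      W w (mono v r) = mono (Finsupp.equivMapDomain w v) r)
    -- the Demazure–Lusztig operators `T_k` and their inverses `Ti k = T k + τ⁻¹ - τ`
    (T Ti : ℕ → Module.End F (Laur F n))
    (hT : ∀ (k : ℕ) (hk : k + 1 < n) (p : Laur F n),
      (Xel ⟨k + 1, hk⟩ - Xel ⟨k, Nat.lt_of_succ_lt hk⟩) * T k p
        = (τ⁻¹ • Xel ⟨k + 1, hk⟩ - τ • Xel ⟨k, Nat.lt_of_succ_lt hk⟩)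
            * W (Equiv.swap ⟨k, Nat.lt_of_succ_lt hk⟩ ⟨k + 1, hk⟩) p
          + (τ - τ⁻¹) • (Xel ⟨k + 1, hk⟩ * p))
    (hTi : ∀ k, Ti k = T k + (τ⁻¹ - τ) • (1 : Module.End F (Laur F n)))
    (hTinv : ∀ k, k + 1 < n → T k * Ti k = 1 ∧ Ti k * T k = 1)
    -- the operator `π⁻¹`
    (piInv : Module.End F (Laur F n))
    (hpiInv : ∀ (v : Fin n →₀ ℤ) (r : F),
      piInv (mono v r)
        = q ^ (v 0) • mono (Finsupp.equivMapDomain (finRotate n).symm v) r)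
    -- the operators `Y_i = T_i ⋯ T_{n-1} ⬝ π⁻¹ ⬝ T_1⁻¹ ⋯ T_{i-1}⁻¹` and their inverses
    (Y Yi : ℕ → Module.End F (Laur F n))
    (hY : ∀ i, Y i = aF T i (n - 1 - i) * piInv * aF Ti 0 i)
    (hYinv : ∀ i, i < n → Y i * Yi i = 1 ∧ Yi i * Y i = 1)
    -- the `q`-shift operators `t_i` and their inverses
    (t ti : Fin n → Module.End F (Laur F n))
    (ht : ∀ (i : Fin n) (v : Fin n →₀ ℤ) (r : F), t i (mono v r) = q ^ (v i) • mono v r)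
    (hti : ∀ (i : Fin n) (v : Fin n →₀ ℤ) (r : F),
      ti i (mono v r) = q ^ (-(v i)) • mono v r)
    -- the van Diejen-type operators `𝒟_i` with parameters `a`, `b`, `c`
    (a b c : F)
    (Dc : ℕ → Module.End F (Laur F n))
    (hDc : ∀ i, Dc i = aF T i (n - 1 - i)
        * (XinvOp (n - 1) * (a • Y (n - 1) + b • Yi (n - 1) + c • 1))
        * dF T i (n - 1 - i))
    :
    ∀ p : Laur F n, (∀ w : Equiv.Perm (Fin n), W w p = p) →
      toFrac ((∑ i ∈ Finset.range n, Dc i) p)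
        = cF (a * τ ^ ((1 : ℤ) - n)) *
            (∑ i : Fin n, toFrac (XinvEl i)
              * (toFrac (∏ j ∈ Finset.univ.erase i, (τ ^ 2 • Xel i - Xel j))
                  / toFrac (∏ j ∈ Finset.univ.erase i, (Xel i - Xel j)))
              * toFrac (t i p))
          + cF (b * τ ^ ((1 : ℤ) - n)) *
            (∑ i : Fin n, toFrac (XinvEl i)
              * (toFrac (∏ j ∈ Finset.univ.erase i, (Xel i - τ ^ 2 • Xel j))
                  / toFrac (∏ j ∈ Finset.univ.erase i, (Xel i - Xel j)))
              * toFrac (ti i p))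
          + cF c * ∑ i : Fin n, toFrac (XinvEl i) * toFrac p := by
  obtain ⟨m, rfl⟩ := Nat.exists_eq_add_one_of_ne_zero (NeZero.ne n)
  intro p hp
  have hWs : ∀ w x, W w x = sig w x := by
    intro w x
    have : W w = (sig w).toLinearMap := by
      apply laur_ext
      intro v r
      rw [hW, AlgEquiv.toLinearMap_apply, sig_mono]
    rw [this]; rfl
  have hps : ∀ w, sig w p = p := fun w => by rw [← hWs, hp]
  have hDL : IsDL τ T := by
    intro k hk x
    rw [← hWs]
    exact hT k hk x
  have hTe : ∀ k, k < m → T k p = τ • p := fun k hk => T_eig hτ hDL k (by omega) p hps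
  have hTie : ∀ k, k < m → Ti k p = τ⁻¹ • p := by
    intro k hk
    rw [hTi, LinearMap.add_apply, hTe k hk, LinearMap.smul_apply, Module.End.one_apply, ← add_smul]
    congr 1
    ring
  have hTXT : ∀ k, k < m → T k * XinvOp (k + 1) * T k = XinvOp k :=
    fun k hk => T_X_T hτ hDL k (by omega)
  have hXT : ∀ k, k < m → XinvOp (k + 1) * T k = Ti k * XinvOp k := by
    intro k hk
    rw [← hTXT k hk, mul_assoc (T k), ← mul_assoc (Ti k), (hTinv k (by omega)).2, one_mul]
  have hYp : Y m p = τ⁻¹ ^ m • t (Fin.last m) p := by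
    have h0 : m + 1 - 1 - m = 0 := by omega
    have h1 := piInv_last m q piInv hpiInv t ht p hps
    rw [hY, h0, aF_zero, one_mul, Module.End.mul_apply, aF_eig Ti τ⁻¹ p m hTie 0 m (by omega),
      map_smul, h1]
  have hYip : Yi m p = dF T 0 m (ti 0 p) := by
    have h0 : m + 1 - 1 - m = 0 := by omega
    have h1 := piInv_ti m q hq piInv hpiInv ti hti p hps
    have h2 : Y m (dF T 0 m (ti 0 p)) = p := by
      rw [hY, h0, aF_zero, one_mul, ← Module.End.mul_apply, mul_assoc,
        aF_dF_inv T Ti m (fun k hk => (hTinv k (by omega)).2) m le_rfl, mul_one, h1]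
    conv_lhs => rw [← h2]
    rw [← Module.End.mul_apply, (hYinv m (by omega)).2, Module.End.one_apply]
  have hD : ∀ i, i < m + 1 → Dc i p =
      (a * τ⁻¹ ^ m * τ ^ (m - i)) • aF T i (m - i) (XinvEl (Fin.last m) * t (Fin.last m) p)
      + (b * τ ^ (m - i)) • dF Ti 0 i (XinvEl 0 * ti 0 p)
      + c • (XinvOp i p) := by
    intro i hi
    have hm1 : m + 1 - 1 = m := by omega
    have him : i + (m - i) = m := by omega
    have hc0 := conj_collapse T (XinvOp (R := F) (n := m + 1)) m hTXT i (m - i) (by omega)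
    rw [him] at hc0
    have hdp := dF_eig T τ p m hTe i (m - i) (by omega)
    have h1 : aF T i (m - i) (XinvOp m (Yi m p)) = dF Ti 0 i (XinvEl 0 * ti 0 p) := by
      have hs := dF_add T 0 i (m - i)
      rw [him, zero_add] at hs
      have h2 : aF T i (m - i) * XinvOp m * dF T 0 m = dF Ti 0 i * XinvOp 0 := by
        rw [hs, ← mul_assoc, hc0,
          push_collapse T Ti (XinvOp (R := F) (n := m + 1)) m hXT i (by omega)]
      have h3 := LinearMap.congr_fun h2 (ti 0 p)
      simp only [Module.End.mul_apply] at h3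
      rw [hYip, h3, XinvOp_apply 0 (by omega)]
      rfl
    have h2 : τ ^ (m - i) • aF T i (m - i) (XinvOp m p) = XinvOp i p := by
      have h3 := LinearMap.congr_fun hc0 p
      simp only [Module.End.mul_apply] at h3
      rw [hdp, map_smul, map_smul] at h3
      exact h3
    have h3 : XinvOp m (t (Fin.last m) p) = XinvEl (Fin.last m) * t (Fin.last m) p :=
      XinvOp_apply m (by omega) _
    rw [hDc, hm1]
    simp only [Module.End.mul_apply]
    rw [hdp]
    simp only [LinearMap.add_apply, LinearMap.smul_apply, Module.End.one_apply, map_smul, map_add,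
      hYp, h1, h3]
    rw [← h2]
    simp only [smul_add, smul_smul]
    congr 1
    · congr 1
      · congr 1; ring
      · congr 1; ring
    · congr 1; ring
  have hA := a_part hτ hDL (fun i => XinvEl i * t i p) (by
    intro w i
    rw [map_mul, sig_Xinv, sig_t (fun z => q ^ z) ht w i p (hps w)])
  have hB := b_part hτ hDL hTi (fun i => XinvEl i * ti i p) (by
    intro w i
    rw [map_mul, sig_Xinv, sig_t (fun z => q ^ (-z)) hti w i p (hps w)])
  have hcτ := cF_ne (n := m + 1) τ hτ
  have hpow : τ ^ ((1 : ℤ) - ((m + 1 : ℕ) : ℤ)) = τ⁻¹ ^ m := by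
    have : (1 : ℤ) - ((m + 1 : ℕ) : ℤ) = -(m : ℤ) := by push_cast; ring
    rw [this, zpow_neg, zpow_natCast, inv_pow]
  have hterm : ∀ i ∈ Finset.range (m + 1), toFrac (Dc i p) =
      cF (a * τ⁻¹ ^ m) * (cF τ ^ (m - i) *
        toFrac (aF T i (m - i) (XinvEl (Fin.last m) * t (Fin.last m) p)))
      + cF b * cF τ ^ m * (((cF τ)⁻¹) ^ i * toFrac (dF Ti 0 i (XinvEl 0 * ti 0 p)))
      + cF c * toFrac (XinvOp i p) := by
    intro i hi
    have hi' := Finset.mem_range.mp hi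
    have e : (cF τ : FractionRing (Laur F (m + 1))) ^ (m - i) = cF τ ^ m * ((cF τ)⁻¹) ^ i := by
      rw [inv_pow, eq_mul_inv_iff_mul_eq₀ (pow_ne_zero _ hcτ), ← pow_add]
      congr 1; omega
    rw [hD i hi', map_add, map_add, toFrac_smul, toFrac_smul, toFrac_smul, cF_mul _ (τ ^ (m - i)),
      cF_mul b, cF_pow, e]
    ring
  rw [LinearMap.sum_apply, map_sum, Finset.sum_congr rfl hterm, Finset.sum_add_distrib,
    Finset.sum_add_distrib, ← Finset.mul_sum, ← Finset.mul_sum, ← Finset.mul_sum, hA, hB, hpow]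
  have hcard : ∀ i : Fin (m + 1), (Finset.univ.erase i).card = m := by
    intro i; simp
  congr 1
  · congr 1
    · congr 1
      refine Finset.sum_congr rfl fun i _ => ?_
      rw [map_mul, map_prod, map_prod, ← Finset.prod_div_distrib]
      simp only [map_sub, toFrac_smul, cF_pow]
      ring
    · rw [cF_mul, mul_assoc, mul_assoc]
      refine congrArg _ ?_
      rw [Finset.mul_sum, Finset.mul_sum]
      refine Finset.sum_congr rfl fun i _ => ?_
      rw [map_mul, map_prod, map_prod, ← Finset.prod_div_distrib]
      simp only [map_sub, toFrac_smul, cF_pow, cF_inv]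
      have hpr : ∏ j ∈ Finset.univ.erase i, (((cF τ)⁻¹ ^ 2 * toFrac (Xel i : Laur F (m + 1))
          - toFrac (Xel j)) / (toFrac (Xel i) - toFrac (Xel j)))
          = ((cF τ)⁻¹ ^ 2) ^ m * ∏ j ∈ Finset.univ.erase i,
            ((toFrac (Xel i : Laur F (m + 1)) - cF τ ^ 2 * toFrac (Xel j))
            / (toFrac (Xel i) - toFrac (Xel j))) := by
        have hps := prod_scale (Finset.univ.erase i) ((cF τ : FractionRing (Laur F (m + 1)))⁻¹ ^ 2)
          (fun j => ((cF τ)⁻¹ ^ 2 * toFrac (Xel i : Laur F (m + 1))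
          - toFrac (Xel j)) / (toFrac (Xel i) - toFrac (Xel j)))
          (fun j => (toFrac (Xel i : Laur F (m + 1)) - cF τ ^ 2 * toFrac (Xel j))
            / (toFrac (Xel i) - toFrac (Xel j))) ?_
        · rw [hcard i] at hps
          exact hps
        intro j _
        rw [← mul_div_assoc]
        congr 1
        field_simp
      rw [hpr]
      have e2 : (cF τ : FractionRing (Laur F (m + 1))) ^ m * ((cF τ)⁻¹ ^ 2) ^ m
          = (cF τ)⁻¹ ^ m := by
        rw [← mul_pow]
        congr 1
        field_simp
      rw [← e2]
      ring
  · congr 1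
    rw [Finset.sum_range]
    refine Finset.sum_congr rfl fun i _ => ?_
    rw [XinvOp_apply _ i.2, map_mul]
end
end
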